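/- Let q be a braiding matrix with connected Dynkin diagram such that B_q is finite dimensional, and let B be a pre-Nichols algebra of q with finite GKdim. Let i,j,k ∈ I_θ be such that q_{ii} = q̃_{ij}^{−1} ∈ G_9', q_{jj} = q̃_{jk}^{−1} = q_{ii}^5, q̃_{ik} = 1 and q_{kk} = q_{ii}^6. Then [[x_{ijk}, x_j]_c, x_k]_c = (1 + q̃_{jk})^{−1} q_{jk} [[x_{ijk}, x_k]_c, x_j]_c in B. -/

import Mathlib

/-
Common framework for formalizing statements from
"Finite GK-dimensional pre-Nichols algebras of (super)modular and unidentified type"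
(Angiono, Campagnolo, Sanmarco).

We work over `ℂ` (an algebraically closed field of characteristic zero).
A braiding matrix is `q : Fin θ → Fin θ → ℂˣ`.  The tensor algebra `T(V)` of the
associated braided vector space of diagonal type is realized as the free algebra
on `Fin θ`.  The braided bialgebra structure on `T(V)` (the braided coproduct,
uniquely determined by the braiding matrix) is packaged in the structure
`BraidedStr`: its fields characterize it uniquely, so quantifying over
`S : BraidedStr θ q` is equivalent to using "the" braided coproduct.

A pre-Nichols algebra of `q` is the quotient `T(V)/I` by an ℕ₀-homogeneous
(two-sided) braided bi-ideal `I` generated in degrees ≥ 2 (`IsPreNicholsIdeal`);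
such an ideal is automatically contained in the defining ideal `Jq` of the
Nichols algebra, which is the largest such ideal.  A statement
"`x = 0` holds in the pre-Nichols algebra `T(V)/I`" is formalized as `x ∈ I`.
-/

open scoped TensorProduct

noncomputable section

namespace PreNicholsPaper

/-- The tensor algebra `T(V)` of the braided vector space of diagonal type of rank `θ`. -/
abbrev TV (θ : ℕ) := FreeAlgebra ℂ (Fin θ)

/-- The generator `x_i` of `T(V)`. -/
def gen (θ : ℕ) (i : Fin θ) : TV θ := FreeAlgebra.ι ℂ i

/-- The monomial `x_{i_1} ⋯ x_{i_n}` associated to a word. -/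
def wordElem (θ : ℕ) (w : List (Fin θ)) : TV θ := (w.map (gen θ)).prod

/-- The multidegree in `ℕ₀^θ` of a word. -/
def degW (θ : ℕ) (w : List (Fin θ)) : Fin θ → ℕ := fun i => w.count i

/-- `α_i`, the `i`-th canonical basis vector of `ℕ₀^θ`. -/
def δ (θ : ℕ) (i : Fin θ) : Fin θ → ℕ := fun k => if k = i then 1 else 0

/-- The bilinear form `ℕ₀^θ × ℕ₀^θ → ℂˣ` attached to the braiding matrix,
`q(α_i, α_j) = q_{ij}`, evaluated in `ℂ`. -/
def qf {θ : ℕ} (q : Fin θ → Fin θ → ℂˣ) (a b : Fin θ → ℕ) : ℂ :=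
  ∏ i : Fin θ, ∏ j : Fin θ, (q i j : ℂ) ^ (a i * b j)

/-- `q̃_{ij} = q_{ij} q_{ji}`. -/
def qtil {θ : ℕ} (q : Fin θ → Fin θ → ℂˣ) (i j : Fin θ) : ℂ := (q i j : ℂ) * (q j i : ℂ)

/-- The braided commutator `[u,v]_c = uv - q(a,b) vu` of elements `u, v`
which are homogeneous of multidegrees `a`, `b` respectively. -/
def brk {θ : ℕ} (q : Fin θ → Fin θ → ℂˣ) (a b : Fin θ → ℕ) (u v : TV θ) : TV θ :=
  u * v - qf q a b • (v * u)

/-- `(ad_c x_i) y = x_i y - q(α_i, b) y x_i` for `y` homogeneous of multidegree `b`. -/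
def ad1 {θ : ℕ} (q : Fin θ → Fin θ → ℂˣ) (i : Fin θ) (b : Fin θ → ℕ) (y : TV θ) : TV θ :=
  brk q (δ θ i) b (gen θ i) y

/-- The iterated braided adjoint `x_{i_1 i_2 ⋯ i_k} = (ad_c x_{i_1}) x_{i_2 ⋯ i_k}`. -/
def xw {θ : ℕ} (q : Fin θ → Fin θ → ℂˣ) : List (Fin θ) → TV θ
  | [] => 1
  | [i] => gen θ i
  | i :: w => ad1 q i (degW θ w) (xw q w)

/-- `(ad_c x_i)^m x_j`. -/
def adpow {θ : ℕ} (q : Fin θ → Fin θ → ℂˣ) (i j : Fin θ) : ℕ → TV θ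
  | 0 => gen θ j
  | m + 1 => ad1 q i (fun k => m * δ θ i k + δ θ j k) (adpow q i j m)

/-- The homogeneous component of total degree `n` of `T(V)`. -/
def homogTot (θ : ℕ) (n : ℕ) : Submodule ℂ (TV θ) :=
  Submodule.span ℂ {x | ∃ w : List (Fin θ), w.length = n ∧ x = wordElem θ w}

/-- The homogeneous component of multidegree `d ∈ ℕ₀^θ` of `T(V)`. -/
def homogD (θ : ℕ) (d : Fin θ → ℕ) : Submodule ℂ (TV θ) :=
  Submodule.span ℂ {x | ∃ w : List (Fin θ), degW θ w = d ∧ x = wordElem θ w}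

/-- The braided bialgebra structure on `T(V)` determined by the braiding matrix `q`:
the braided coproduct `Δ` together with the multiplication `mulB` of the braided
tensor product `T(V) ⊗ T(V)`.  These axioms determine `Δ` and `mulB` uniquely. -/
structure BraidedStr (θ : ℕ) (q : Fin θ → Fin θ → ℂˣ) where
  Δ : TV θ →ₗ[ℂ] TensorProduct ℂ (TV θ) (TV θ)
  mulB : TensorProduct ℂ (TV θ) (TV θ) →ₗ[ℂ]
    TensorProduct ℂ (TV θ) (TV θ) →ₗ[ℂ] TensorProduct ℂ (TV θ) (TV θ)
  mulB_spec : ∀ (a d : TV θ) (wb wc : List (Fin θ)),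
    mulB (a ⊗ₜ[ℂ] wordElem θ wb) (wordElem θ wc ⊗ₜ[ℂ] d)
      = qf q (degW θ wb) (degW θ wc) • ((a * wordElem θ wc) ⊗ₜ[ℂ] (wordElem θ wb * d))
  Δ_one : Δ 1 = 1 ⊗ₜ[ℂ] 1
  Δ_gen : ∀ i, Δ (gen θ i) = gen θ i ⊗ₜ[ℂ] 1 + 1 ⊗ₜ[ℂ] gen θ i
  Δ_mul : ∀ u v : TV θ, Δ (u * v) = mulB (Δ u) (Δ v)

variable {θ : ℕ} {q : Fin θ → Fin θ → ℂˣ}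

/-- `x` is a primitive element. -/
def IsPrimitiveIn (S : BraidedStr θ q) (x : TV θ) : Prop :=
  S.Δ x = x ⊗ₜ[ℂ] (1 : TV θ) + (1 : TV θ) ⊗ₜ[ℂ] x

/-- The submodule `I ⊗ T(V) + T(V) ⊗ J` of `T(V) ⊗ T(V)`. -/
def mixedPair (I J : Submodule ℂ (TV θ)) : Submodule ℂ (TensorProduct ℂ (TV θ) (TV θ)) :=
  Submodule.span ℂ
    ({x | ∃ a b : TV θ, a ∈ I ∧ x = a ⊗ₜ[ℂ] b} ∪ {x | ∃ a b : TV θ, b ∈ J ∧ x = a ⊗ₜ[ℂ] b})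

/-- The submodule `I ⊗ T(V) + T(V) ⊗ I` of `T(V) ⊗ T(V)`. -/
def mixedSub (I : Submodule ℂ (TV θ)) : Submodule ℂ (TensorProduct ℂ (TV θ) (TV θ)) :=
  mixedPair I I

/-- `I` is the defining ideal of a pre-Nichols algebra of `q`：an ℕ₀-homogeneous
two-sided (bi-)ideal of `T(V)` generated in degrees `≥ 2` which is also a coideal.
Such an ideal is automatically contained in the defining ideal `Jq` of the Nichols
algebra, and the pre-Nichols algebra is the quotient `T(V)/I`. -/
structure IsPreNicholsIdeal (S : BraidedStr θ q) (I : Submodule ℂ (TV θ)) : Prop where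
  mul_left : ∀ a x : TV θ, x ∈ I → a * x ∈ I
  mul_right : ∀ a x : TV θ, x ∈ I → x * a ∈ I
  homog_ge2 : I = Submodule.span ℂ {x | x ∈ I ∧ ∃ n, 2 ≤ n ∧ x ∈ homogTot θ n}
  coideal : ∀ x ∈ I, S.Δ x ∈ mixedSub I

/-- The defining ideal `J_q` of the Nichols algebra `B_q = T(V)/J_q`:
the maximal homogeneous braided Hopf ideal generated in degrees `≥ 2`. -/
def Jq (S : BraidedStr θ q) : Submodule ℂ (TV θ) := sSup {I | IsPreNicholsIdeal S I}

/-- The standard filtration of `T(V)`: span of words of length `≤ n`. -/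
def Wfil (θ : ℕ) (n : ℕ) : Submodule ℂ (TV θ) :=
  Submodule.span ℂ {x | ∃ w : List (Fin θ), w.length ≤ n ∧ x = wordElem θ w}

/-- The quotient algebra `T(V)/I` has finite Gelfand–Kirillov dimension, i.e.
the standard filtration of the (finitely generated) quotient has polynomial growth. -/
def FinGK (I : Submodule ℂ (TV θ)) : Prop :=
  ∃ C d : ℕ, ∀ n : ℕ, Module.finrank ℂ ((Wfil θ n).map I.mkQ) ≤ C * (n + 1) ^ d

/-- The Gelfand–Kirillov dimension of the quotient algebra `T(V)/I`. -/
def GKdim (I : Submodule ℂ (TV θ)) : ℝ :=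
  Filter.limsup
    (fun n : ℕ => Real.log (Module.finrank ℂ ((Wfil θ n).map I.mkQ)) / Real.log n)
    Filter.atTop

/-- `I` defines an eminent pre-Nichols algebra: it is a finite-GKdim pre-Nichols
algebra, and every finite-GKdim pre-Nichols algebra of `q` is a quotient of it. -/
def IsEminent (S : BraidedStr θ q) (I : Submodule ℂ (TV θ)) : Prop :=
  IsPreNicholsIdeal S I ∧ FinGK I ∧
    ∀ I' : Submodule ℂ (TV θ), IsPreNicholsIdeal S I' → FinGK I' → I ≤ I'

/-- The Dynkin diagram of the braiding matrix `q`: vertices `Fin θ`, an edge between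
`i ≠ j` iff `q̃_{ij} ≠ 1`. -/
def dynkin {θ : ℕ} (q : Fin θ → Fin θ → ℂˣ) : SimpleGraph (Fin θ) :=
  SimpleGraph.fromRel (fun i j => qtil q i j ≠ 1)

/-- The quantum number `(m)_t = 1 + t + ⋯ + t^{m-1}`. -/
def qnum (t : ℂ) (m : ℕ) : ℂ := ∑ k ∈ Finset.range m, t ^ k

/-- The set of `n ∈ ℕ₀` such that `(n+1)_{q_{ii}} (1 - q_{ii}^n q̃_{ij}) = 0`,
i.e. such that `(ad_c x_i)^{n+1} x_j = 0` in the Nichols algebra.  The entry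
`c_{ij}` of the generalized Cartan matrix is `-(min of this set)`. -/
def cSet {θ : ℕ} (q : Fin θ → Fin θ → ℂˣ) (i j : Fin θ) : Set ℕ :=
  {n | qnum (q i i : ℂ) (n + 1) * (1 - (q i i : ℂ) ^ n * qtil q i j) = 0}

/-- The generalized Cartan matrix of `q`. -/
def cij {θ : ℕ} (q : Fin θ → Fin θ → ℂˣ) (i j : Fin θ) : ℤ :=
  if i = j then 2 else -(Int.ofNat (sInf (cSet q i j)))

/-- All entries `c_{ij}` are defined at the vertex `i`. -/
def reflectable {θ : ℕ} (q : Fin θ → Fin θ → ℂˣ) (i : Fin θ) : Prop :=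
  ∀ j, j ≠ i → (cSet q i j).Nonempty

/-- The `i`-th reflection of the braiding matrix:
`(r_i q)_{jk} = q(s_i α_j, s_i α_k)` where `s_i α_j = α_j - c_{ij} α_i`. -/
def reflectMat {θ : ℕ} (q : Fin θ → Fin θ → ℂˣ) (i : Fin θ) : Fin θ → Fin θ → ℂˣ :=
  fun j k =>
    q j k * q j i ^ (-(cij q i k)) * q i k ^ (-(cij q i j)) * q i i ^ (cij q i j * cij q i k)

/-- The reflection `s_i` acting on `ℤ^θ`. -/
def sRefl {θ : ℕ} (q : Fin θ → Fin θ → ℂˣ) (i : Fin θ) (β : Fin θ → ℤ) : Fin θ → ℤ :=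
  fun k => β k - (if k = i then ∑ j, cij q i j * β j else 0)

/-- The (real) roots of `q`, together with the base points of the Weyl groupoid at
which they live: pairs `(q', β)` obtained from a simple root of `q` by iterated
reflections. -/
inductive ReachRoot {θ : ℕ} (q₀ : Fin θ → Fin θ → ℂˣ) :
    (Fin θ → Fin θ → ℂˣ) → (Fin θ → ℤ) → Prop
  | simple (j : Fin θ) : ReachRoot q₀ q₀ (fun k => if k = j then 1 else 0)
  | reflect {q' : Fin θ → Fin θ → ℂˣ} {β : Fin θ → ℤ} (i : Fin θ) :
      ReachRoot q₀ q' β → ReachRoot q₀ (reflectMat q' i) (sRefl q' i β)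

/-- `q` has a finite (generalized) root system: all reflections are defined at every
point of the Weyl groupoid, and the set of roots so obtained is finite. -/
def FiniteRootSystem {θ : ℕ} (q : Fin θ → Fin θ → ℂˣ) : Prop :=
  (∀ q' i, (∃ β, ReachRoot q q' β) → reflectable q' i) ∧
    Set.Finite {β : Fin θ → ℤ | ∃ q', ReachRoot q q' β}

/-- Conjecture (Andruskiewitsch–Angiono–Heckenberger): the root system of a Nichols
algebra of diagonal type with finite Gelfand–Kirillov dimension is finite. -/
def AAH : Prop :=
  ∀ (θ : ℕ) (q : Fin θ → Fin θ → ℂˣ) (S : BraidedStr θ q), FinGK (Jq S) → FiniteRootSystem q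

/-- The two-sided ideal of `T(V)` generated by a set. -/
def idealGen (θ : ℕ) (s : Set (TV θ)) : Submodule ℂ (TV θ) :=
  Submodule.span ℂ {x | ∃ g ∈ s, ∃ a b : TV θ, x = a * g * b}

end PreNicholsPaper

namespace PreNicholsPaper

section BilinearForm

variable {θ : ℕ} (q : Fin θ → Fin θ → ℂˣ)

lemma qf_add_left (a a' b : Fin θ → ℕ) : qf q (a + a') b = qf q a b * qf q a' b := by
  simp [qf, add_mul, pow_add, Finset.prod_mul_distrib]

lemma qf_add_right (a b b' : Fin θ → ℕ) : qf q a (b + b') = qf q a b * qf q a b' := by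
  simp [qf, mul_add, pow_add, Finset.prod_mul_distrib]

@[simp]
lemma qf_zero_left (b : Fin θ → ℕ) : qf q 0 b = 1 := by simp [qf]

@[simp]
lemma qf_zero_right (a : Fin θ → ℕ) : qf q a 0 = 1 := by simp [qf]

lemma qf_nsmul_left (n : ℕ) (a b : Fin θ → ℕ) : qf q (n • a) b = qf q a b ^ n := by
  induction n with
  | zero => simp
  | succ n ih => rw [succ_nsmul, qf_add_left, ih, pow_succ]

lemma qf_nsmul_right (n : ℕ) (a b : Fin θ → ℕ) : qf q a (n • b) = qf q a b ^ n := by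
  induction n with
  | zero => simp
  | succ n ih => rw [succ_nsmul, qf_add_right, ih, pow_succ]

@[simp]
lemma qf_δ_δ (i j : Fin θ) : qf q (δ θ i) (δ θ j) = q i j := by
  unfold qf
  rw [Finset.prod_eq_single i, Finset.prod_eq_single j]
  · simp [δ]
  · intro b _ hb; simp [δ, hb]
  · simp
  · intro b _ hb; simp [δ, hb]
  · simp

lemma qf_ne_zero (a b : Fin θ → ℕ) : qf q a b ≠ 0 := by
  simp [qf, Finset.prod_ne_zero_iff]

end BilinearForm

section Words

variable {θ : ℕ}

@[simp]
lemma wordElem_nil : wordElem θ [] = 1 := rfl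

@[simp]
lemma wordElem_cons (i : Fin θ) (w : List (Fin θ)) :
    wordElem θ (i :: w) = gen θ i * wordElem θ w := by simp [wordElem]

lemma wordElem_append (v w : List (Fin θ)) :
    wordElem θ (v ++ w) = wordElem θ v * wordElem θ w := by simp [wordElem]

lemma wordElem_singleton (i : Fin θ) : wordElem θ [i] = gen θ i := by simp

@[simp]
lemma degW_nil : degW θ [] = 0 := by ext; simp [degW]

lemma degW_append (v w : List (Fin θ)) : degW θ (v ++ w) = degW θ v + degW θ w := by
  ext; simp [degW]

lemma degW_singleton (i : Fin θ) : degW θ [i] = δ θ i := by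
  ext k
  by_cases h : k = i
  · simp [degW, δ, h]
  · simp [degW, δ, h, List.count_eq_zero]

lemma degW_cons (i : Fin θ) (w : List (Fin θ)) : degW θ (i :: w) = δ θ i + degW θ w := by
  rw [← degW_singleton, ← degW_append, List.singleton_append]

/-- The basis of words of the tensor algebra. -/
def wordBasis (θ : ℕ) : Module.Basis (List (Fin θ)) ℂ (TV θ) :=
  (FreeAlgebra.basisFreeMonoid ℂ (Fin θ)).reindex FreeMonoid.toList

@[simp]
lemma wordBasis_apply (w : List (Fin θ)) : wordBasis θ w = wordElem θ w := by
  simp only [wordBasis, Module.Basis.reindex_apply, FreeAlgebra.basisFreeMonoid,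
    Module.Basis.map_apply, Finsupp.coe_basisSingleOne]
  change FreeAlgebra.equivMonoidAlgebraFreeMonoid.symm
    (MonoidAlgebra.single (FreeMonoid.ofList w) (1 : ℂ)) = _
  simp only [FreeAlgebra.equivMonoidAlgebraFreeMonoid, AlgEquiv.ofAlgHom_symm,
    AlgEquiv.ofAlgHom_apply, MonoidAlgebra.lift_single, one_smul, FreeMonoid.lift_apply]
  rfl

lemma word_induction {p : TV θ → Prop} (x : TV θ) (zero : p 0)
    (word : ∀ w, p (wordElem θ w)) (add : ∀ x y, p x → p y → p (x + y))
    (smul : ∀ (c : ℂ) x, p x → p (c • x)) : p x := by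
  have hx : x ∈ Submodule.span ℂ (Set.range (wordBasis θ)) := by
    rw [(wordBasis θ).span_eq]; trivial
  induction hx using Submodule.span_induction with
  | mem x h => obtain ⟨w, rfl⟩ := h; simpa using word w
  | zero => exact zero
  | add x y _ _ hx hy => exact add x y hx hy
  | smul c x _ hx => exact smul c x hx

/-- The coefficient of a word. -/
def coeffW (w : List (Fin θ)) : TV θ →ₗ[ℂ] ℂ := (wordBasis θ).coord w

lemma coeffW_word (v w : List (Fin θ)) :
    coeffW v (wordElem θ w) = if w = v then 1 else 0 := by
  rw [coeffW, ← wordBasis_apply, Module.Basis.coord_apply, Module.Basis.repr_self,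
    Finsupp.single_apply]

/-- The projection onto the component of total degree `n`. -/
def projTot (n : ℕ) : TV θ →ₗ[ℂ] TV θ :=
  (wordBasis θ).constr ℂ fun w => if w.length = n then wordElem θ w else 0

lemma projTot_word (n : ℕ) (w : List (Fin θ)) :
    projTot n (wordElem θ w) = if w.length = n then wordElem θ w else 0 := by
  rw [← wordBasis_apply, projTot, Module.Basis.constr_basis, wordBasis_apply]

lemma projTot_of_mem {n : ℕ} (m : ℕ) {x : TV θ} (hx : x ∈ homogTot θ n) :
    projTot m x = if n = m then x else 0 := by
  induction hx using Submodule.span_induction with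
  | mem x h => obtain ⟨w, rfl, rfl⟩ := h; rw [projTot_word]
  | zero => simp
  | add x y _ _ hx hy => rw [map_add, hx, hy]; split_ifs <;> simp
  | smul c x _ hx => rw [map_smul, hx]; split_ifs <;> simp

lemma projTot_mem (n : ℕ) (x : TV θ) : projTot n x ∈ homogTot θ n := by
  induction x using word_induction with
  | zero => simp
  | word w =>
    rw [projTot_word]
    split_ifs with h
    · exact Submodule.subset_span ⟨w, h, rfl⟩
    · exact zero_mem _
  | add x y hx hy => rw [map_add]; exact add_mem hx hy
  | smul c x hx => rw [map_smul]; exact Submodule.smul_mem _ _ hx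

lemma coeffW_of_mem {n : ℕ} {x : TV θ} (hx : x ∈ homogTot θ n) {v : List (Fin θ)}
    (hv : v.length ≠ n) : coeffW v x = 0 := by
  induction hx using Submodule.span_induction with
  | mem x h =>
    obtain ⟨w, hw, rfl⟩ := h
    rw [coeffW_word, if_neg]
    rintro rfl; exact hv hw
  | zero => simp
  | add x y _ _ hx hy => rw [map_add, hx, hy, add_zero]
  | smul c x _ hx => rw [map_smul, hx, smul_zero]

lemma homogD_mul {d e : Fin θ → ℕ} {x y : TV θ} (hx : x ∈ homogD θ d) (hy : y ∈ homogD θ e) :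
    x * y ∈ homogD θ (d + e) := by
  induction hx using Submodule.span_induction with
  | mem x h =>
    obtain ⟨v, rfl, rfl⟩ := h
    induction hy using Submodule.span_induction with
    | mem y h =>
      obtain ⟨w, rfl, rfl⟩ := h
      exact Submodule.subset_span ⟨v ++ w, degW_append v w, (wordElem_append v w).symm⟩
    | zero => simp
    | add x y _ _ hx hy => rw [mul_add]; exact add_mem hx hy
    | smul c x _ hx => rw [mul_smul_comm]; exact Submodule.smul_mem _ _ hx
  | zero => simp
  | add x y _ _ hx hy => rw [add_mul]; exact add_mem hx hy
  | smul c x _ hx => rw [smul_mul_assoc]; exact Submodule.smul_mem _ _ hx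

lemma one_mem_homogD : (1 : TV θ) ∈ homogD θ 0 :=
  Submodule.subset_span ⟨[], degW_nil, rfl⟩

lemma gen_mem_homogD (i : Fin θ) : gen θ i ∈ homogD θ (δ θ i) :=
  Submodule.subset_span ⟨[i], degW_singleton i, (wordElem_singleton i).symm⟩

lemma brk_mem_homogD (q : Fin θ → Fin θ → ℂˣ) {d e : Fin θ → ℕ} {x y : TV θ}
    (hx : x ∈ homogD θ d) (hy : y ∈ homogD θ e) : brk q d e x y ∈ homogD θ (d + e) :=
  sub_mem (homogD_mul hx hy)
    (Submodule.smul_mem _ _ (by rw [add_comm d e]; exact homogD_mul hy hx))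

lemma sum_degW (w : List (Fin θ)) : ∑ k, degW θ w k = w.length := by
  induction w with
  | nil => simp
  | cons i w ih => simp [degW_cons, Finset.sum_add_distrib, ih, δ, add_comm]

lemma homogD_le_homogTot (d : Fin θ → ℕ) : homogD θ d ≤ homogTot θ (∑ k, d k) := by
  refine Submodule.span_mono ?_
  rintro _ ⟨w, rfl, rfl⟩
  exact ⟨w, (sum_degW w).symm, rfl⟩

end Words

section Twists

variable {θ : ℕ} (q : Fin θ → Fin θ → ℂˣ)

/-- The automorphism of `T(V)` acting on degree `d` by `q(β, d)`. -/
def twistL (β : Fin θ → ℕ) : TV θ →ₐ[ℂ] TV θ :=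
  FreeAlgebra.lift ℂ fun b => qf q β (δ θ b) • gen θ b

/-- The automorphism of `T(V)` acting on degree `d` by `q(d, β)`. -/
def twistR (β : Fin θ → ℕ) : TV θ →ₐ[ℂ] TV θ :=
  FreeAlgebra.lift ℂ fun b => qf q (δ θ b) β • gen θ b

@[simp]
lemma twistL_gen (β : Fin θ → ℕ) (b : Fin θ) :
    twistL q β (gen θ b) = qf q β (δ θ b) • gen θ b := by
  simp [twistL, gen]

@[simp]
lemma twistR_gen (β : Fin θ → ℕ) (b : Fin θ) :
    twistR q β (gen θ b) = qf q (δ θ b) β • gen θ b := by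
  simp [twistR, gen]

lemma twistL_word (β : Fin θ → ℕ) (w : List (Fin θ)) :
    twistL q β (wordElem θ w) = qf q β (degW θ w) • wordElem θ w := by
  induction w with
  | nil => simp
  | cons i w ih => simp [ih, degW_cons, qf_add_right, smul_smul, mul_comm]

lemma twistR_word (β : Fin θ → ℕ) (w : List (Fin θ)) :
    twistR q β (wordElem θ w) = qf q (degW θ w) β • wordElem θ w := by
  induction w with
  | nil => simp
  | cons i w ih => simp [ih, degW_cons, qf_add_left, smul_smul, mul_comm]

lemma twistL_of_mem (β : Fin θ → ℕ) {d : Fin θ → ℕ} {x : TV θ} (hx : x ∈ homogD θ d) :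
    twistL q β x = qf q β d • x := by
  induction hx using Submodule.span_induction with
  | mem x h => obtain ⟨w, rfl, rfl⟩ := h; exact twistL_word q β w
  | zero => simp
  | add x y _ _ hx hy => rw [map_add, hx, hy, smul_add]
  | smul c x _ hx => rw [map_smul, hx, smul_comm]

lemma twistR_of_mem (β : Fin θ → ℕ) {d : Fin θ → ℕ} {x : TV θ} (hx : x ∈ homogD θ d) :
    twistR q β x = qf q d β • x := by
  induction hx using Submodule.span_induction with
  | mem x h => obtain ⟨w, rfl, rfl⟩ := h; exact twistR_word q β w
  | zero => simp
  | add x y _ _ hx hy => rw [map_add, hx, hy, smul_add]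
  | smul c x _ hx => rw [map_smul, hx, smul_comm]

lemma twistL_add (β γ : Fin θ → ℕ) (x : TV θ) :
    twistL q (β + γ) x = twistL q β (twistL q γ x) := by
  have : twistL q (β + γ) = (twistL q β).comp (twistL q γ) := by
    ext b
    change twistL q (β + γ) (gen θ b) = twistL q β (twistL q γ (gen θ b))
    simp [qf_add_left, smul_smul, mul_comm]
  rw [this, AlgHom.comp_apply]

lemma twistR_add (β γ : Fin θ → ℕ) (x : TV θ) :
    twistR q (β + γ) x = twistR q β (twistR q γ x) := by
  have : twistR q (β + γ) = (twistR q β).comp (twistR q γ) := by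
    ext b
    change twistR q (β + γ) (gen θ b) = twistR q β (twistR q γ (gen θ b))
    simp [qf_add_right, smul_smul, mul_comm]
  rw [this, AlgHom.comp_apply]

lemma twistL_zero (x : TV θ) : twistL q 0 x = x := by
  have : twistL q 0 = AlgHom.id ℂ _ := by
    ext b
    change twistL q 0 (gen θ b) = gen θ b
    simp
  rw [this, AlgHom.id_apply]

lemma twistR_zero (x : TV θ) : twistR q 0 x = x := by
  have : twistR q 0 = AlgHom.id ℂ _ := by
    ext b
    change twistR q 0 (gen θ b) = gen θ b
    simp
  rw [this, AlgHom.id_apply]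

end Twists

section BraidedStructure

variable {θ : ℕ} {q : Fin θ → Fin θ → ℂˣ}

lemma tensor_word_induction {p : TV θ ⊗[ℂ] TV θ → Prop} (M : TV θ ⊗[ℂ] TV θ) (zero : p 0)
    (tmul : ∀ v w, p (wordElem θ v ⊗ₜ wordElem θ w)) (add : ∀ x y, p x → p y → p (x + y))
    (smul : ∀ (c : ℂ) x, p x → p (c • x)) : p M := by
  induction M using TensorProduct.induction_on with
  | zero => exact zero
  | add x y hx hy => exact add x y hx hy
  | tmul x y =>
    induction x using word_induction with
    | zero => simpa using zero
    | add a b ha hb => rw [TensorProduct.add_tmul]; exact add _ _ ha hb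
    | smul c a ha => rw [← TensorProduct.smul_tmul']; exact smul _ _ ha
    | word v =>
      induction y using word_induction with
      | zero => simpa using zero
      | add a b ha hb => rw [TensorProduct.tmul_add]; exact add _ _ ha hb
      | smul c a ha => rw [TensorProduct.tmul_smul]; exact smul _ _ ha
      | word w => exact tmul v w

lemma mulB_twistL (S : BraidedStr θ q) (a c d : TV θ) (w : List (Fin θ)) :
    S.mulB (a ⊗ₜ wordElem θ w) (c ⊗ₜ d)
      = (a * twistL q (degW θ w) c) ⊗ₜ (wordElem θ w * d) := by
  induction c using word_induction with
  | zero => simp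
  | word v => simp [S.mulB_spec, twistL_word, TensorProduct.smul_tmul']
  | add x y hx hy => simp only [TensorProduct.add_tmul, map_add, hx, hy, mul_add]
  | smul r x hx =>
    simp only [← TensorProduct.smul_tmul', map_smul, hx, mul_smul_comm]

lemma mulB_twistR (S : BraidedStr θ q) (a b d : TV θ) (w : List (Fin θ)) :
    S.mulB (a ⊗ₜ b) (wordElem θ w ⊗ₜ d)
      = (a * wordElem θ w) ⊗ₜ (twistR q (degW θ w) b * d) := by
  induction b using word_induction with
  | zero => simp
  | word v => simp [S.mulB_spec, twistR_word]
  | add x y hx hy => simp only [TensorProduct.tmul_add, map_add, LinearMap.add_apply, hx, hy,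
      add_mul]
  | smul r x hx =>
    simp only [TensorProduct.tmul_smul, map_smul, LinearMap.smul_apply, hx, smul_mul_assoc]

lemma mulB_of_mem (S : BraidedStr θ q) (a d : TV θ) {b c : TV θ} {β γ : Fin θ → ℕ}
    (hb : b ∈ homogD θ β) (hc : c ∈ homogD θ γ) :
    S.mulB (a ⊗ₜ b) (c ⊗ₜ d) = qf q β γ • ((a * c) ⊗ₜ (b * d)) := by
  induction hb using Submodule.span_induction with
  | mem b h =>
    obtain ⟨w, rfl, rfl⟩ := h
    rw [mulB_twistL, twistL_of_mem q _ hc, mul_smul_comm, TensorProduct.smul_tmul']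
  | zero => simp
  | add x y _ _ hx hy =>
    rw [TensorProduct.tmul_add, map_add, LinearMap.add_apply, hx, hy, add_mul,
      TensorProduct.tmul_add, smul_add]
  | smul r x _ hx =>
    rw [TensorProduct.tmul_smul, map_smul, LinearMap.smul_apply, hx, smul_mul_assoc,
      TensorProduct.tmul_smul, smul_comm]

lemma mulB_tmul_one (S : BraidedStr θ q) (a c d : TV θ) :
    S.mulB (a ⊗ₜ 1) (c ⊗ₜ d) = (a * c) ⊗ₜ d := by
  simpa [twistL_zero] using mulB_twistL S a c d []

lemma mulB_tmul_gen (S : BraidedStr θ q) (a c d : TV θ) (i : Fin θ) :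
    S.mulB (a ⊗ₜ gen θ i) (c ⊗ₜ d) = (a * twistL q (δ θ i) c) ⊗ₜ (gen θ i * d) := by
  simpa [degW_singleton] using mulB_twistL S a c d [i]

lemma mulB_gen_tmul (S : BraidedStr θ q) (a b d : TV θ) (i : Fin θ) :
    S.mulB (a ⊗ₜ b) (gen θ i ⊗ₜ d) = (a * gen θ i) ⊗ₜ (twistR q (δ θ i) b * d) := by
  simpa [degW_singleton] using mulB_twistR S a b d [i]

lemma mulB_one_tmul (S : BraidedStr θ q) (a b d : TV θ) :
    S.mulB (a ⊗ₜ b) (1 ⊗ₜ d) = a ⊗ₜ (b * d) := by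
  simpa [twistR_zero] using mulB_twistR S a b d []

/-- Contraction of the right tensor factor with a functional. -/
def contractR (f : TV θ →ₗ[ℂ] ℂ) : TV θ ⊗[ℂ] TV θ →ₗ[ℂ] TV θ :=
  (TensorProduct.rid ℂ (TV θ)).toLinearMap ∘ₗ f.lTensor (TV θ)

/-- Contraction of the left tensor factor with a functional. -/
def contractL (f : TV θ →ₗ[ℂ] ℂ) : TV θ ⊗[ℂ] TV θ →ₗ[ℂ] TV θ :=
  (TensorProduct.lid ℂ (TV θ)).toLinearMap ∘ₗ f.rTensor (TV θ)

@[simp]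
lemma contractR_tmul (f : TV θ →ₗ[ℂ] ℂ) (x y : TV θ) : contractR f (x ⊗ₜ y) = f y • x := by
  simp [contractR]

@[simp]
lemma contractL_tmul (f : TV θ →ₗ[ℂ] ℂ) (x y : TV θ) : contractL f (x ⊗ₜ y) = f x • y := by
  simp [contractL]

lemma coeffW_gen_mul (a i : Fin θ) (v : List (Fin θ)) (x : TV θ) :
    coeffW (a :: v) (gen θ i * x) = if i = a then coeffW v x else 0 := by
  induction x using word_induction with
  | zero => simp
  | word w =>
    rw [← wordElem_cons, coeffW_word, coeffW_word]
    by_cases h : i = a <;> simp [h]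
  | add x y hx hy => rw [mul_add, map_add, hx, hy]; split_ifs <;> simp
  | smul c x hx => rw [mul_smul_comm, map_smul, hx]; split_ifs <;> simp

lemma coeffW_nil_gen_mul (i : Fin θ) (x : TV θ) : coeffW [] (gen θ i * x) = 0 := by
  induction x using word_induction with
  | zero => simp
  | word w => rw [← wordElem_cons, coeffW_word]; simp
  | add x y hx hy => rw [mul_add, map_add, hx, hy, add_zero]
  | smul c x hx => rw [mul_smul_comm, map_smul, hx, smul_zero]

lemma coeffW_singleton_mul_gen (a : Fin θ) (x : TV θ) :
    coeffW [a] (x * gen θ a) = coeffW [] x := by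
  induction x using word_induction with
  | zero => simp
  | word w =>
    rw [← wordElem_singleton, ← wordElem_append, coeffW_word, coeffW_word]
    cases w <;> simp
  | add x y hx hy => rw [add_mul, map_add, hx, hy, map_add]
  | smul c x hx => rw [smul_mul_assoc, map_smul, hx, map_smul]

lemma coeffW_nil_one : coeffW [] (1 : TV θ) = 1 := by
  rw [← wordElem_nil, coeffW_word, if_pos rfl]

lemma contractR_comul (S : BraidedStr θ q) (x : TV θ) : contractR (coeffW []) (S.Δ x) = x := by
  induction x using word_induction with
  | zero => simp
  | add x y hx hy => rw [map_add, map_add, hx, hy]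
  | smul c x hx => rw [map_smul, map_smul, hx]
  | word w =>
    induction w with
    | nil => simp [S.Δ_one, coeffW_nil_one]
    | cons i w ih =>
      have h (M : TV θ ⊗[ℂ] TV θ) : contractR (coeffW []) (S.mulB (S.Δ (gen θ i)) M)
          = gen θ i * contractR (coeffW []) M := by
        induction M using TensorProduct.induction_on with
        | zero => simp
        | add x y hx hy => rw [map_add, map_add, hx, hy, map_add, mul_add]
        | tmul x y =>
          simp [S.Δ_gen, mulB_tmul_one, mulB_tmul_gen, coeffW_nil_gen_mul]
      rw [wordElem_cons, S.Δ_mul, h, ih]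

lemma contractL_comul (S : BraidedStr θ q) (x : TV θ) : contractL (coeffW []) (S.Δ x) = x := by
  induction x using word_induction with
  | zero => simp
  | add x y hx hy => rw [map_add, map_add, hx, hy]
  | smul c x hx => rw [map_smul, map_smul, hx]
  | word w =>
    induction w with
    | nil => simp [S.Δ_one, coeffW_nil_one]
    | cons i w ih =>
      have h (M : TV θ ⊗[ℂ] TV θ) : contractL (coeffW []) (S.mulB (S.Δ (gen θ i)) M)
          = gen θ i * contractL (coeffW []) M := by
        induction M using tensor_word_induction with
        | zero => simp
        | add x y hx hy => rw [map_add, map_add, hx, hy, map_add, mul_add]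
        | smul c x hx => rw [map_smul, map_smul, hx, map_smul, mul_smul_comm]
        | tmul v w =>
          simp only [S.Δ_gen, map_add, LinearMap.add_apply, mulB_tmul_one, mulB_tmul_gen,
            contractL_tmul, coeffW_nil_gen_mul, zero_smul, zero_add, one_mul, twistL_word,
            map_smul, coeffW_word]
          split_ifs with h
          · simp [h]
          · simp
      rw [wordElem_cons, S.Δ_mul, h, ih]

/-- The braided multiplication on `T(V) ⊗ T(V)`. -/
def braidedMul (q : Fin θ → Fin θ → ℂˣ) :
    TV θ ⊗[ℂ] TV θ →ₗ[ℂ] TV θ ⊗[ℂ] TV θ →ₗ[ℂ] TV θ ⊗[ℂ] TV θ :=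
  ((wordBasis θ).tensorProduct (wordBasis θ)).constr ℂ fun x =>
    ((wordBasis θ).tensorProduct (wordBasis θ)).constr ℂ fun y =>
      qf q (degW θ x.2) (degW θ y.1) • (wordElem θ (x.1 ++ y.1) ⊗ₜ wordElem θ (x.2 ++ y.2))

lemma braidedMul_word (a b c d : List (Fin θ)) :
    braidedMul q (wordElem θ a ⊗ₜ wordElem θ b) (wordElem θ c ⊗ₜ wordElem θ d)
      = qf q (degW θ b) (degW θ c) • (wordElem θ (a ++ c) ⊗ₜ wordElem θ (b ++ d)) := by
  have h (v w : List (Fin θ)) : wordElem θ v ⊗ₜ[ℂ] wordElem θ w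
      = (wordBasis θ).tensorProduct (wordBasis θ) (v, w) := by simp
  rw [h a b, h c d, braidedMul, Module.Basis.constr_basis, Module.Basis.constr_basis]

lemma braidedMul_assoc (L M N : TV θ ⊗[ℂ] TV θ) :
    braidedMul q (braidedMul q L M) N = braidedMul q L (braidedMul q M N) := by
  induction L using tensor_word_induction with
  | zero => simp
  | add x y hx hy => simp only [map_add, LinearMap.add_apply, hx, hy]
  | smul c x hx => simp only [map_smul, LinearMap.smul_apply, hx]
  | tmul a b =>
  induction M using tensor_word_induction with
  | zero => simp
  | add x y hx hy => simp only [map_add, LinearMap.add_apply, hx, hy]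
  | smul c x hx => simp only [map_smul, LinearMap.smul_apply, hx]
  | tmul c d =>
  induction N using tensor_word_induction with
  | zero => simp
  | add x y hx hy => simp only [map_add, hx, hy]
  | smul c x hx => simp only [map_smul, hx]
  | tmul e f =>
    simp only [braidedMul_word, map_smul, LinearMap.smul_apply, smul_smul, degW_append,
      qf_add_left, qf_add_right, List.append_assoc]
    congr 1
    ring

/-- The braided coproduct of a word. -/
def comulWord (q : Fin θ → Fin θ → ℂˣ) : List (Fin θ) → TV θ ⊗[ℂ] TV θ
  | [] => 1 ⊗ₜ 1
  | i :: w => braidedMul q (gen θ i ⊗ₜ 1 + 1 ⊗ₜ gen θ i) (comulWord q w)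

lemma one_braidedMul (M : TV θ ⊗[ℂ] TV θ) : braidedMul q (1 ⊗ₜ 1) M = M := by
  induction M using tensor_word_induction with
  | zero => simp
  | add x y hx hy => rw [map_add, hx, hy]
  | smul c x hx => rw [map_smul, hx]
  | tmul a b => simpa using braidedMul_word (q := q) [] [] a b

lemma braidedMul_one (M : TV θ ⊗[ℂ] TV θ) : braidedMul q M (1 ⊗ₜ 1) = M := by
  induction M using tensor_word_induction with
  | zero => simp
  | add x y hx hy => rw [map_add, LinearMap.add_apply, hx, hy]
  | smul c x hx => rw [map_smul, LinearMap.smul_apply, hx]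
  | tmul a b => simpa using braidedMul_word (q := q) a b [] []

lemma comulWord_append (v w : List (Fin θ)) :
    comulWord q (v ++ w) = braidedMul q (comulWord q v) (comulWord q w) := by
  induction v with
  | nil => simp [comulWord, one_braidedMul]
  | cons i v ih => simp only [List.cons_append, comulWord, ih, braidedMul_assoc]

/-- The braided bialgebra structure of `T(V)`. -/
def braidedStr (q : Fin θ → Fin θ → ℂˣ) : BraidedStr θ q where
  Δ := (wordBasis θ).constr ℂ (comulWord q)
  mulB := braidedMul q
  mulB_spec a d v w := by
    induction a using word_induction with
    | zero => simp
    | add x y hx hy => simp only [TensorProduct.add_tmul, map_add, LinearMap.add_apply, hx, hy,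
        add_mul, smul_add]
    | smul c x hx =>
      rw [← TensorProduct.smul_tmul', map_smul, LinearMap.smul_apply, hx, smul_mul_assoc,
        ← TensorProduct.smul_tmul', smul_comm]
    | word a =>
      induction d using word_induction with
      | zero => simp
      | add x y hx hy => simp only [TensorProduct.tmul_add, map_add, hx, hy, mul_add, smul_add]
      | smul c x hx =>
        rw [TensorProduct.tmul_smul, map_smul, hx, mul_smul_comm, TensorProduct.tmul_smul,
          smul_comm]
      | word d => rw [braidedMul_word, wordElem_append, wordElem_append]
  Δ_one := by
    rw [← wordElem_nil, ← wordBasis_apply, Module.Basis.constr_basis]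
    simp [comulWord]
  Δ_gen i := by
    rw [← wordElem_singleton, ← wordBasis_apply, Module.Basis.constr_basis]
    simp only [comulWord, braidedMul_one, wordBasis_apply, wordElem_singleton]
  Δ_mul u v := by
    have hw (w : List (Fin θ)) :
        (wordBasis θ).constr ℂ (comulWord q) (wordElem θ w) = comulWord q w := by
      rw [← wordBasis_apply, Module.Basis.constr_basis]
    induction u using word_induction with
    | zero => simp
    | add x y hx hy => simp only [add_mul, map_add, LinearMap.add_apply, hx, hy]
    | smul c x hx => simp only [smul_mul_assoc, map_smul, LinearMap.smul_apply, hx]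
    | word a =>
      induction v using word_induction with
      | zero => simp
      | add x y hx hy => simp only [mul_add, map_add, hx, hy]
      | smul c x hx => simp only [mul_smul_comm, map_smul, hx]
      | word b => rw [← wordElem_append, hw, hw, hw, comulWord_append]

end BraidedStructure

section MixedSub

variable {θ : ℕ}

lemma tmul_mem_mixedSub_left {I : Submodule ℂ (TV θ)} {a : TV θ} (b : TV θ) (ha : a ∈ I) :
    a ⊗ₜ b ∈ mixedSub I :=
  Submodule.subset_span (Or.inl ⟨a, b, ha, rfl⟩)

lemma tmul_mem_mixedSub_right {I : Submodule ℂ (TV θ)} (a : TV θ) {b : TV θ} (hb : b ∈ I) :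
    a ⊗ₜ b ∈ mixedSub I :=
  Submodule.subset_span (Or.inr ⟨a, b, hb, rfl⟩)

lemma mixedSub_induction {I : Submodule ℂ (TV θ)}
    {p : (M : TV θ ⊗[ℂ] TV θ) → M ∈ mixedSub I → Prop} (zero : p 0 (zero_mem _))
    (left : ∀ a b (ha : a ∈ I), p (a ⊗ₜ b) (tmul_mem_mixedSub_left b ha))
    (right : ∀ a b (hb : b ∈ I), p (a ⊗ₜ b) (tmul_mem_mixedSub_right a hb))
    (add : ∀ x y hx hy, p x hx → p y hy → p (x + y) (add_mem hx hy))
    (smul : ∀ (c : ℂ) x hx, p x hx → p (c • x) (Submodule.smul_mem _ c hx))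
    {M : TV θ ⊗[ℂ] TV θ} (hM : M ∈ mixedSub I) : p M hM := by
  induction hM using Submodule.span_induction with
  | mem x h =>
    rcases h with ⟨a, b, ha, rfl⟩ | ⟨a, b, hb, rfl⟩
    exacts [left a b ha, right a b hb]
  | zero => exact zero
  | add x y hx hy h h' => exact add x y hx hy h h'
  | smul c x hx h => exact smul c x hx h

lemma ker_map_eq_mixedSub {M : Type*} [AddCommGroup M] [Module ℂ M] (f : TV θ →ₗ[ℂ] M) :
    LinearMap.ker (TensorProduct.map f f) = mixedSub (LinearMap.ker f) := by
  apply le_antisymm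
  · intro x hx
    have hf : f = (LinearMap.range f).subtype ∘ₗ f.rangeRestrict := rfl
    have hinj : Function.Injective
        (TensorProduct.map (LinearMap.range f).subtype (LinearMap.range f).subtype) :=
      TensorProduct.map_injective_of_flat_flat _ _ (Submodule.subtype_injective _)
        (Submodule.subtype_injective _)
    have hx' : x ∈ LinearMap.ker (TensorProduct.map f.rangeRestrict f.rangeRestrict) := by
      rw [LinearMap.mem_ker] at hx ⊢
      apply hinj
      rw [map_zero, ← hx, ← LinearMap.comp_apply, ← TensorProduct.map_comp]
      rfl
    have hex : Function.Exact (LinearMap.ker f).subtype f.rangeRestrict := by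
      rw [LinearMap.exact_iff]; simp
    rw [TensorProduct.map_ker hex f.surjective_rangeRestrict hex
      f.surjective_rangeRestrict] at hx'
    refine (sup_le ?_ ?_ : _ ≤ mixedSub (LinearMap.ker f)) hx'
    · rintro _ ⟨y, rfl⟩
      induction y using TensorProduct.induction_on with
      | zero => simp
      | add x y hx hy => rw [map_add]; exact add_mem hx hy
      | tmul a b => exact tmul_mem_mixedSub_right a b.2
    · rintro _ ⟨y, rfl⟩
      induction y using TensorProduct.induction_on with
      | zero => simp
      | add x y hx hy => rw [map_add]; exact add_mem hx hy
      | tmul a b => exact tmul_mem_mixedSub_left b a.2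
  · intro x hx
    induction hx using mixedSub_induction with
    | zero => simp
    | left a b ha => rw [LinearMap.mem_ker] at *; simp [ha]
    | right a b hb => rw [LinearMap.mem_ker] at *; simp [hb]
    | add x y _ _ hx hy => exact add_mem hx hy
    | smul c x _ hx => exact Submodule.smul_mem _ _ hx

lemma contractR_mem {I : Submodule ℂ (TV θ)} {f : TV θ →ₗ[ℂ] ℂ} (hf : ∀ x ∈ I, f x = 0)
    {M : TV θ ⊗[ℂ] TV θ} (hM : M ∈ mixedSub I) : contractR f M ∈ I := by
  induction hM using mixedSub_induction with
  | zero => simp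
  | left a b ha => simpa using I.smul_mem _ ha
  | right a b hb => simp [hf b hb]
  | add x y _ _ hx hy => rw [map_add]; exact add_mem hx hy
  | smul c x _ hx => rw [map_smul]; exact Submodule.smul_mem _ _ hx

lemma contractL_mem {I : Submodule ℂ (TV θ)} {f : TV θ →ₗ[ℂ] ℂ} (hf : ∀ x ∈ I, f x = 0)
    {M : TV θ ⊗[ℂ] TV θ} (hM : M ∈ mixedSub I) : contractL f M ∈ I := by
  induction hM using mixedSub_induction with
  | zero => simp
  | left a b ha => simp [hf a ha]
  | right a b hb => simpa using I.smul_mem _ hb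
  | add x y _ _ hx hy => rw [map_add]; exact add_mem hx hy
  | smul c x _ hx => rw [map_smul]; exact Submodule.smul_mem _ _ hx

end MixedSub

namespace IsPreNicholsIdeal

variable {θ : ℕ} {q : Fin θ → Fin θ → ℂˣ} {S : BraidedStr θ q} {I : Submodule ℂ (TV θ)}

lemma coeffW_eq_zero (hI : IsPreNicholsIdeal S I) {v : List (Fin θ)} (hv : v.length < 2)
    {x : TV θ} (hx : x ∈ I) : coeffW v x = 0 := by
  rw [hI.homog_ge2] at hx
  induction hx using Submodule.span_induction with
  | mem x h => obtain ⟨_, n, hn, h⟩ := h; exact coeffW_of_mem h (by omega)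
  | zero => simp
  | add x y _ _ hx hy => rw [map_add, hx, hy, add_zero]
  | smul c x _ hx => rw [map_smul, hx, smul_zero]

lemma projTot_mem (hI : IsPreNicholsIdeal S I) (n : ℕ) {x : TV θ} (hx : x ∈ I) :
    projTot n x ∈ I := by
  rw [hI.homog_ge2] at hx
  induction hx using Submodule.span_induction with
  | mem x h =>
    obtain ⟨hxI, m, _, h⟩ := h
    rw [projTot_of_mem n h]
    split_ifs
    exacts [hxI, zero_mem _]
  | zero => simp
  | add x y _ _ hx hy => rw [map_add]; exact add_mem hx hy
  | smul c x _ hx => rw [map_smul]; exact Submodule.smul_mem _ _ hx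

lemma mulB_tmul_one_mem (hI : IsPreNicholsIdeal S I) (a : TV θ) {M : TV θ ⊗[ℂ] TV θ}
    (hM : M ∈ mixedSub I) : S.mulB (a ⊗ₜ 1) M ∈ mixedSub I := by
  induction hM using mixedSub_induction with
  | zero => simp
  | left c d hc =>
    rw [mulB_tmul_one]; exact tmul_mem_mixedSub_left _ (hI.mul_left _ _ hc)
  | right c d hd => rw [mulB_tmul_one]; exact tmul_mem_mixedSub_right _ hd
  | add x y _ _ hx hy => rw [map_add]; exact add_mem hx hy
  | smul c x _ hx => rw [map_smul]; exact Submodule.smul_mem _ _ hx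

lemma mulB_one_tmul_mem (hI : IsPreNicholsIdeal S I) (d : TV θ) {M : TV θ ⊗[ℂ] TV θ}
    (hM : M ∈ mixedSub I) : S.mulB M (1 ⊗ₜ d) ∈ mixedSub I := by
  induction hM using mixedSub_induction with
  | zero => simp
  | left a b ha => rw [mulB_one_tmul]; exact tmul_mem_mixedSub_left _ ha
  | right a b hb =>
    rw [mulB_one_tmul]; exact tmul_mem_mixedSub_right _ (hI.mul_right _ _ hb)
  | add x y _ _ hx hy => rw [map_add, LinearMap.add_apply]; exact add_mem hx hy
  | smul c x _ hx => rw [map_smul, LinearMap.smul_apply]; exact Submodule.smul_mem _ _ hx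

lemma twistL_δ_mem (hI : IsPreNicholsIdeal S I) (i : Fin θ) {x : TV θ} (hx : x ∈ I) :
    twistL q (δ θ i) x ∈ I := by
  have h : S.mulB (1 ⊗ₜ gen θ i) (S.Δ x) ∈ mixedSub I := by
    have := sub_mem (hI.coideal _ (hI.mul_left (gen θ i) x hx))
      (hI.mulB_tmul_one_mem (gen θ i) (hI.coideal x hx))
    rwa [S.Δ_mul, S.Δ_gen, map_add, LinearMap.add_apply, add_sub_cancel_left] at this
  have key (M : TV θ ⊗[ℂ] TV θ) : contractR (coeffW [i]) (S.mulB (1 ⊗ₜ gen θ i) M)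
      = twistL q (δ θ i) (contractR (coeffW []) M) := by
    induction M using TensorProduct.induction_on with
    | zero => simp
    | add x y hx hy => simp only [map_add, hx, hy]
    | tmul a b => simp [mulB_tmul_gen, coeffW_gen_mul]
  have := contractR_mem (f := coeffW [i]) (fun x hx => hI.coeffW_eq_zero (by simp) hx) h
  rwa [key, contractR_comul] at this

lemma twistR_δ_mem (hI : IsPreNicholsIdeal S I) (i : Fin θ) {x : TV θ} (hx : x ∈ I) :
    twistR q (δ θ i) x ∈ I := by
  have h : S.mulB (S.Δ x) (gen θ i ⊗ₜ 1) ∈ mixedSub I := by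
    have := sub_mem (hI.coideal _ (hI.mul_right (gen θ i) x hx))
      (hI.mulB_one_tmul_mem (gen θ i) (hI.coideal x hx))
    rwa [S.Δ_mul, S.Δ_gen, map_add, add_sub_cancel_right] at this
  have key (M : TV θ ⊗[ℂ] TV θ) : contractL (coeffW [i]) (S.mulB M (gen θ i ⊗ₜ 1))
      = twistR q (δ θ i) (contractL (coeffW []) M) := by
    induction M using TensorProduct.induction_on with
    | zero => simp
    | add x y hx hy => simp only [map_add, LinearMap.add_apply, hx, hy]
    | tmul a b => simp [mulB_gen_tmul, coeffW_singleton_mul_gen]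
  have := contractL_mem (f := coeffW [i]) (fun x hx => hI.coeffW_eq_zero (by simp) hx) h
  rwa [key, contractL_comul] at this

lemma twistL_degW_mem (hI : IsPreNicholsIdeal S I) (w : List (Fin θ)) {x : TV θ} (hx : x ∈ I) :
    twistL q (degW θ w) x ∈ I := by
  induction w with
  | nil => simpa [twistL_zero] using hx
  | cons i w ih => rw [degW_cons, twistL_add]; exact hI.twistL_δ_mem i ih

lemma twistR_degW_mem (hI : IsPreNicholsIdeal S I) (w : List (Fin θ)) {x : TV θ} (hx : x ∈ I) :
    twistR q (degW θ w) x ∈ I := by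
  induction w with
  | nil => simpa [twistR_zero] using hx
  | cons i w ih => rw [degW_cons, twistR_add]; exact hI.twistR_δ_mem i ih

lemma mulB_mem_left (hI : IsPreNicholsIdeal S I) {M : TV θ ⊗[ℂ] TV θ} (N : TV θ ⊗[ℂ] TV θ)
    (hM : M ∈ mixedSub I) : S.mulB M N ∈ mixedSub I := by
  induction N using tensor_word_induction with
  | zero => simp
  | add x y hx hy => rw [map_add]; exact add_mem hx hy
  | smul c x hx => rw [map_smul]; exact Submodule.smul_mem _ _ hx
  | tmul v w =>
    induction hM using mixedSub_induction with
    | zero => simp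
    | add x y _ _ hx hy => rw [map_add, LinearMap.add_apply]; exact add_mem hx hy
    | smul c x _ hx => rw [map_smul, LinearMap.smul_apply]; exact Submodule.smul_mem _ _ hx
    | left a b ha => rw [mulB_twistR]; exact tmul_mem_mixedSub_left _ (hI.mul_right _ _ ha)
    | right a b hb =>
      rw [mulB_twistR]
      exact tmul_mem_mixedSub_right _ (hI.mul_right _ _ (hI.twistR_degW_mem v hb))

lemma mulB_mem_right (hI : IsPreNicholsIdeal S I) (M : TV θ ⊗[ℂ] TV θ) {N : TV θ ⊗[ℂ] TV θ}
    (hN : N ∈ mixedSub I) : S.mulB M N ∈ mixedSub I := by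
  induction M using tensor_word_induction with
  | zero => simp
  | add x y hx hy => rw [map_add, LinearMap.add_apply]; exact add_mem hx hy
  | smul c x hx => rw [map_smul, LinearMap.smul_apply]; exact Submodule.smul_mem _ _ hx
  | tmul v w =>
    induction hN using mixedSub_induction with
    | zero => simp
    | add x y _ _ hx hy => rw [map_add]; exact add_mem hx hy
    | smul c x _ hx => rw [map_smul]; exact Submodule.smul_mem _ _ hx
    | left a b ha =>
      rw [mulB_twistL]
      exact tmul_mem_mixedSub_left _ (hI.mul_left _ _ (hI.twistL_degW_mem w ha))
    | right a b hb => rw [mulB_twistL]; exact tmul_mem_mixedSub_right _ (hI.mul_left _ _ hb)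

end IsPreNicholsIdeal

section Homogenization

variable {θ : ℕ} {q : Fin θ → Fin θ → ℂˣ}

/-- The projection of `T(V) ⊗ T(V)` onto the component of total degree `n`. -/
def projTensor (n : ℕ) : TV θ ⊗[ℂ] TV θ →ₗ[ℂ] TV θ ⊗[ℂ] TV θ :=
  ∑ p ∈ Finset.HasAntidiagonal.antidiagonal n, TensorProduct.map (projTot p.1) (projTot p.2)

lemma projTensor_word (n : ℕ) (v w : List (Fin θ)) :
    projTensor n (wordElem θ v ⊗ₜ wordElem θ w)
      = if v.length + w.length = n then wordElem θ v ⊗ₜ[ℂ] wordElem θ w else 0 := by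
  simp only [projTensor, LinearMap.sum_apply, TensorProduct.map_tmul, projTot_word]
  split_ifs with h
  · rw [Finset.sum_eq_single (v.length, w.length)]
    · simp
    · rintro ⟨a, b⟩ _ hne
      by_cases ha : v.length = a
      · have hb : w.length ≠ b := fun hb => hne (by rw [ha, hb])
        simp [hb]
      · simp [ha]
    · intro hn
      exact absurd (Finset.HasAntidiagonal.mem_antidiagonal.2 h) hn
  · refine Finset.sum_eq_zero ?_
    rintro ⟨a, b⟩ hab
    rw [Finset.HasAntidiagonal.mem_antidiagonal] at hab
    by_cases ha : v.length = a
    · have hb : w.length ≠ b := fun hb => h (by rw [ha, hb]; exact hab)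
      simp [hb]
    · simp [ha]

lemma projTensor_mulB_gen (S : BraidedStr θ q) (i : Fin θ) (n : ℕ) (M : TV θ ⊗[ℂ] TV θ) :
    projTensor (n + 1) (S.mulB (S.Δ (gen θ i)) M)
      = S.mulB (S.Δ (gen θ i)) (projTensor n M) := by
  induction M using tensor_word_induction with
  | zero => simp
  | add x y hx hy => simp only [map_add, hx, hy]
  | smul c x hx => simp only [map_smul, hx]
  | tmul v w =>
    have h : S.mulB (S.Δ (gen θ i)) (wordElem θ v ⊗ₜ wordElem θ w)
        = wordElem θ (i :: v) ⊗ₜ wordElem θ w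
          + qf q (δ θ i) (degW θ v) • (wordElem θ v ⊗ₜ wordElem θ (i :: w)) := by
      simp [S.Δ_gen, mulB_tmul_one, mulB_tmul_gen, twistL_word, TensorProduct.smul_tmul']
    rw [h, map_add, map_smul, projTensor_word, projTensor_word, projTensor_word]
    have h₁ : (i :: v).length + w.length = n + 1 ↔ v.length + w.length = n := by
      rw [List.length_cons]; omega
    have h₂ : v.length + (i :: w).length = n + 1 ↔ v.length + w.length = n := by
      rw [List.length_cons]; omega
    simp only [h₁, h₂]
    split_ifs
    · rw [h]
    · simp

lemma projTensor_zero_mulB_gen (S : BraidedStr θ q) (i : Fin θ) (M : TV θ ⊗[ℂ] TV θ) :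
    projTensor 0 (S.mulB (S.Δ (gen θ i)) M) = 0 := by
  induction M using tensor_word_induction with
  | zero => simp
  | add x y hx hy => simp only [map_add, hx, hy, add_zero]
  | smul c x hx => simp only [map_smul, hx, smul_zero]
  | tmul v w =>
    have h : S.mulB (S.Δ (gen θ i)) (wordElem θ v ⊗ₜ wordElem θ w)
        = wordElem θ (i :: v) ⊗ₜ wordElem θ w
          + qf q (δ θ i) (degW θ v) • (wordElem θ v ⊗ₜ wordElem θ (i :: w)) := by
      simp [S.Δ_gen, mulB_tmul_one, mulB_tmul_gen, twistL_word, TensorProduct.smul_tmul']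
    rw [h, map_add, map_smul, projTensor_word, projTensor_word]
    simp

lemma projTensor_comul (S : BraidedStr θ q) (n : ℕ) (x : TV θ) :
    projTensor n (S.Δ x) = S.Δ (projTot n x) := by
  induction x using word_induction with
  | zero => simp
  | add x y hx hy => simp only [map_add, hx, hy]
  | smul c x hx => simp only [map_smul, hx]
  | word w =>
    induction w generalizing n with
    | nil =>
      have := projTensor_word (θ := θ) n [] []
      simp only [wordElem_nil, List.length_nil, add_zero] at this
      rw [projTot_word, wordElem_nil, S.Δ_one, this, List.length_nil]
      split_ifs
      · rw [S.Δ_one]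
      · simp
    | cons i w ih =>
      rw [wordElem_cons, S.Δ_mul, ← wordElem_cons, projTot_word, List.length_cons]
      cases n with
      | zero => simp [projTensor_zero_mulB_gen]
      | succ n =>
        rw [projTensor_mulB_gen, ih, projTot_word]
        simp only [Nat.add_right_cancel_iff]
        split_ifs
        · rw [wordElem_cons, S.Δ_mul]
        · simp

lemma word_mul_projTot (w : List (Fin θ)) (n : ℕ) (x : TV θ) :
    wordElem θ w * projTot n x = projTot (w.length + n) (wordElem θ w * x) := by
  induction x using word_induction with
  | zero => simp
  | add x y hx hy => simp only [map_add, mul_add, hx, hy]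
  | smul c x hx => simp only [map_smul, mul_smul_comm, hx]
  | word v => simp [← wordElem_append, projTot_word]

lemma projTot_mul_word (w : List (Fin θ)) (n : ℕ) (x : TV θ) :
    projTot n x * wordElem θ w = projTot (n + w.length) (x * wordElem θ w) := by
  induction x using word_induction with
  | zero => simp
  | add x y hx hy => simp only [map_add, add_mul, hx, hy]
  | smul c x hx => simp only [map_smul, smul_mul_assoc, hx]
  | word v => simp [← wordElem_append, projTot_word]

/-- The smallest homogeneous subspace containing `K`. -/
def homogenization (K : Submodule ℂ (TV θ)) : Submodule ℂ (TV θ) :=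
  Submodule.span ℂ {x | ∃ f ∈ K, ∃ n, x = projTot n f}

lemma projTot_mem_homogenization {K : Submodule ℂ (TV θ)} {f : TV θ} (hf : f ∈ K) (n : ℕ) :
    projTot n f ∈ homogenization K :=
  Submodule.subset_span ⟨f, hf, n, rfl⟩

lemma exists_sum_projTot (x : TV θ) :
    ∃ N, ∀ n, N ≤ n → ∑ m ∈ Finset.range n, projTot m x = x := by
  induction x using word_induction with
  | zero => exact ⟨0, by simp⟩
  | add x y hx hy =>
    obtain ⟨N, hN⟩ := hx
    obtain ⟨M, hM⟩ := hy
    refine ⟨max N M, fun n hn => ?_⟩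
    simp only [map_add, Finset.sum_add_distrib]
    rw [hN n (by omega), hM n (by omega)]
  | smul c x hx =>
    obtain ⟨N, hN⟩ := hx
    refine ⟨N, fun n hn => ?_⟩
    simp only [map_smul, ← Finset.smul_sum]
    rw [hN n hn]
  | word w =>
    refine ⟨w.length + 1, fun n hn => ?_⟩
    simp only [projTot_word, Finset.sum_ite_eq, Finset.mem_range]
    rw [if_pos (by omega)]

lemma le_homogenization (K : Submodule ℂ (TV θ)) : K ≤ homogenization K := by
  intro f hf
  obtain ⟨N, hN⟩ := exists_sum_projTot f
  rw [← hN N le_rfl]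
  exact sum_mem fun n _ => projTot_mem_homogenization hf n

lemma projTensor_mem_mixedSub {K : Submodule ℂ (TV θ)} (n : ℕ) {M : TV θ ⊗[ℂ] TV θ}
    (hM : M ∈ mixedSub K) : projTensor n M ∈ mixedSub (homogenization K) := by
  induction hM using mixedSub_induction with
  | zero => simp
  | add x y _ _ hx hy => rw [map_add]; exact add_mem hx hy
  | smul c x _ hx => rw [map_smul]; exact Submodule.smul_mem _ _ hx
  | left a b ha =>
    simp only [projTensor, LinearMap.sum_apply, TensorProduct.map_tmul]
    exact sum_mem fun p _ => tmul_mem_mixedSub_left _ (projTot_mem_homogenization ha _)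
  | right a b hb =>
    simp only [projTensor, LinearMap.sum_apply, TensorProduct.map_tmul]
    exact sum_mem fun p _ => tmul_mem_mixedSub_right _ (projTot_mem_homogenization hb _)

lemma homogenization_isPreNicholsIdeal (S : BraidedStr θ q) {K : Submodule ℂ (TV θ)}
    (mul_left : ∀ a x : TV θ, x ∈ K → a * x ∈ K) (mul_right : ∀ a x : TV θ, x ∈ K → x * a ∈ K)
    (coideal : ∀ x ∈ K, S.Δ x ∈ mixedSub K) (low : ∀ x ∈ K, ∀ n < 2, projTot n x = 0) :
    IsPreNicholsIdeal S (homogenization K) where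
  mul_left a x hx := by
    induction a using word_induction with
    | zero => simp
    | add a b ha hb => rw [add_mul]; exact add_mem ha hb
    | smul c a ha => rw [smul_mul_assoc]; exact Submodule.smul_mem _ _ ha
    | word w =>
      induction hx using Submodule.span_induction with
      | mem x h =>
        obtain ⟨f, hf, n, rfl⟩ := h
        rw [word_mul_projTot]
        exact projTot_mem_homogenization (mul_left _ _ hf) _
      | zero => simp
      | add x y _ _ hx hy => rw [mul_add]; exact add_mem hx hy
      | smul c x _ hx => rw [mul_smul_comm]; exact Submodule.smul_mem _ _ hx
  mul_right a x hx := by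
    induction a using word_induction with
    | zero => simp
    | add a b ha hb => rw [mul_add]; exact add_mem ha hb
    | smul c a ha => rw [mul_smul_comm]; exact Submodule.smul_mem _ _ ha
    | word w =>
      induction hx using Submodule.span_induction with
      | mem x h =>
        obtain ⟨f, hf, n, rfl⟩ := h
        rw [projTot_mul_word]
        exact projTot_mem_homogenization (mul_right _ _ hf) _
      | zero => simp
      | add x y _ _ hx hy => rw [add_mul]; exact add_mem hx hy
      | smul c x _ hx => rw [smul_mul_assoc]; exact Submodule.smul_mem _ _ hx
  homog_ge2 := by
    apply le_antisymm
    · refine Submodule.span_le.2 ?_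
      rintro _ ⟨f, hf, n, rfl⟩
      by_cases hn : n < 2
      · rw [low f hf n hn]; exact zero_mem _
      · exact Submodule.subset_span
          ⟨projTot_mem_homogenization hf n, n, not_lt.1 hn, projTot_mem n f⟩
    · exact Submodule.span_le.2 fun x hx => hx.1
  coideal x hx := by
    induction hx using Submodule.span_induction with
    | mem x h =>
      obtain ⟨f, hf, n, rfl⟩ := h
      rw [← projTensor_comul]
      exact projTensor_mem_mixedSub n (coideal f hf)
    | zero => simp
    | add x y _ _ hx hy => rw [map_add]; exact add_mem hx hy
    | smul c x _ hx => rw [map_smul]; exact Submodule.smul_mem _ _ hx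

end Homogenization

section SubBraiding

variable {θ n : ℕ} {q : Fin θ → Fin θ → ℂˣ}

/-- The braiding matrix of homogeneous elements of degrees `D s`. -/
def subMat (q : Fin θ → Fin θ → ℂˣ) (D : Fin n → Fin θ → ℕ) : Fin n → Fin n → ℂˣ :=
  fun s t => Units.mk0 (qf q (D s) (D t)) (qf_ne_zero q _ _)

lemma qf_sum_left {ι : Type*} (s : Finset ι) (f : ι → Fin θ → ℕ) (b : Fin θ → ℕ) :
    qf q (∑ x ∈ s, f x) b = ∏ x ∈ s, qf q (f x) b := by
  classical
  induction s using Finset.induction_on with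
  | empty => simp
  | insert a s ha ih => rw [Finset.sum_insert ha, Finset.prod_insert ha, qf_add_left, ih]

lemma qf_sum_right {ι : Type*} (s : Finset ι) (f : ι → Fin θ → ℕ) (b : Fin θ → ℕ) :
    qf q b (∑ x ∈ s, f x) = ∏ x ∈ s, qf q b (f x) := by
  classical
  induction s using Finset.induction_on with
  | empty => simp
  | insert a s ha ih => rw [Finset.sum_insert ha, Finset.prod_insert ha, qf_add_right, ih]

lemma qf_subMat (D : Fin n → Fin θ → ℕ) (e e' : Fin n → ℕ) :
    qf (subMat q D) e e' = qf q (∑ s, e s • D s) (∑ t, e' t • D t) := by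
  rw [qf_sum_left]
  simp only [qf_sum_right, qf_nsmul_left, qf_nsmul_right, ← pow_mul]
  simp only [qf, subMat, Units.val_mk0]

/-- The algebra map from a free algebra sending the generators to given elements. -/
def subHom (X : Fin n → TV θ) : TV n →ₐ[ℂ] TV θ := FreeAlgebra.lift ℂ X

@[simp]
lemma subHom_gen (X : Fin n → TV θ) (s : Fin n) : subHom X (gen n s) = X s := by
  simp [subHom, gen]

lemma subHom_word_mem {X : Fin n → TV θ} {D : Fin n → Fin θ → ℕ}
    (hX : ∀ s, X s ∈ homogD θ (D s)) (w : List (Fin n)) :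
    subHom X (wordElem n w) ∈ homogD θ (∑ s, degW n w s • D s) := by
  induction w with
  | nil => simpa using one_mem_homogD
  | cons i w ih =>
    rw [wordElem_cons, map_mul, subHom_gen]
    convert homogD_mul (hX i) ih using 2
    simp only [degW_cons, Pi.add_apply, add_smul, Finset.sum_add_distrib]
    congr 1
    simp [δ]

lemma map_subHom_mulB (S : BraidedStr θ q) {X : Fin n → TV θ} {D : Fin n → Fin θ → ℕ}
    (hX : ∀ s, X s ∈ homogD θ (D s)) (S' : BraidedStr n (subMat q D)) (M N : TV n ⊗[ℂ] TV n) :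
    TensorProduct.map (subHom X).toLinearMap (subHom X).toLinearMap (S'.mulB M N)
      = S.mulB (TensorProduct.map (subHom X).toLinearMap (subHom X).toLinearMap M)
          (TensorProduct.map (subHom X).toLinearMap (subHom X).toLinearMap N) := by
  induction M using tensor_word_induction with
  | zero => simp
  | add x y hx hy => simp only [map_add, LinearMap.add_apply, hx, hy]
  | smul c x hx => simp only [map_smul, LinearMap.smul_apply, hx]
  | tmul a b =>
  induction N using tensor_word_induction with
  | zero => simp
  | add x y hx hy => simp only [map_add, hx, hy]
  | smul c x hx => simp only [map_smul, hx]
  | tmul c d =>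
    rw [S'.mulB_spec, map_smul, TensorProduct.map_tmul, TensorProduct.map_tmul,
      TensorProduct.map_tmul]
    simp only [AlgHom.toLinearMap_apply]
    rw [mulB_of_mem S _ _ (subHom_word_mem hX b) (subHom_word_mem hX c), map_mul, map_mul,
      qf_subMat]

/-- `x` is primitive in `T(V)/I`. -/
def IsPrimitiveMod (S : BraidedStr θ q) (I : Submodule ℂ (TV θ)) (x : TV θ) : Prop :=
  S.Δ x - (x ⊗ₜ 1 + 1 ⊗ₜ x) ∈ mixedSub I

lemma comul_subHom (S : BraidedStr θ q) {I : Submodule ℂ (TV θ)} (hI : IsPreNicholsIdeal S I)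
    {X : Fin n → TV θ} {D : Fin n → Fin θ → ℕ} (hX : ∀ s, X s ∈ homogD θ (D s))
    (hprim : ∀ s, IsPrimitiveMod S I (X s)) (S' : BraidedStr n (subMat q D)) (f : TV n) :
    S.Δ (subHom X f)
      - TensorProduct.map (subHom X).toLinearMap (subHom X).toLinearMap (S'.Δ f)
      ∈ mixedSub I := by
  induction f using word_induction with
  | zero => simp
  | add x y hx hy =>
    simp only [map_add]
    rw [add_sub_add_comm]
    exact add_mem hx hy
  | smul c x hx =>
    simpa only [map_smul, smul_sub] using Submodule.smul_mem _ c hx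
  | word w =>
    induction w with
    | nil => simp [S.Δ_one, S'.Δ_one]
    | cons s w ih =>
      have h := add_mem (hI.mulB_mem_left (S.Δ (subHom X (wordElem n w))) (hprim s))
        (hI.mulB_mem_right (X s ⊗ₜ 1 + 1 ⊗ₜ X s) ih)
      rw [wordElem_cons, map_mul, S.Δ_mul, S'.Δ_mul, map_subHom_mulB S hX, S'.Δ_gen, map_add,
        TensorProduct.map_tmul, TensorProduct.map_tmul]
      simp only [AlgHom.toLinearMap_apply, map_one, subHom_gen]
      rw [map_sub, LinearMap.sub_apply, map_sub] at h
      simpa using h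

lemma comul_mem_of_subHom_mem (S : BraidedStr θ q) {I : Submodule ℂ (TV θ)}
    (hI : IsPreNicholsIdeal S I)
    {X : Fin n → TV θ} {D : Fin n → Fin θ → ℕ} (hX : ∀ s, X s ∈ homogD θ (D s))
    (hprim : ∀ s, IsPrimitiveMod S I (X s)) (S' : BraidedStr n (subMat q D)) {f : TV n}
    (hf : subHom X f ∈ I) : S'.Δ f ∈ mixedSub (I.comap (subHom X).toLinearMap) := by
  have h := sub_mem (hI.coideal _ hf) (comul_subHom S hI hX hprim S' f)
  rw [sub_sub_cancel] at h
  have hker : I.comap (subHom X).toLinearMap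
      = LinearMap.ker (I.mkQ ∘ₗ (subHom X).toLinearMap) := by
    rw [LinearMap.ker_comp, Submodule.ker_mkQ]
  rw [hker, ← ker_map_eq_mixedSub, LinearMap.mem_ker, TensorProduct.map_comp,
    LinearMap.comp_apply, ← LinearMap.mem_ker, ker_map_eq_mixedSub, Submodule.ker_mkQ]
  exact h

end SubBraiding

section PrimitivePair

variable {θ : ℕ} {q : Fin θ → Fin θ → ℂˣ}

lemma homogTot_mul {m n : ℕ} {x y : TV θ} (hx : x ∈ homogTot θ m) (hy : y ∈ homogTot θ n) :
    x * y ∈ homogTot θ (m + n) := by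
  induction hx using Submodule.span_induction with
  | mem x h =>
    obtain ⟨v, rfl, rfl⟩ := h
    induction hy using Submodule.span_induction with
    | mem y h =>
      obtain ⟨w, rfl, rfl⟩ := h
      exact Submodule.subset_span ⟨v ++ w, by simp, (wordElem_append v w).symm⟩
    | zero => simp
    | add x y _ _ hx hy => rw [mul_add]; exact add_mem hx hy
    | smul c x _ hx => rw [mul_smul_comm]; exact Submodule.smul_mem _ _ hx
  | zero => simp
  | add x y _ _ hx hy => rw [add_mul]; exact add_mem hx hy
  | smul c x _ hx => rw [smul_mul_assoc]; exact Submodule.smul_mem _ _ hx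

lemma gen_mem_homogTot (i : Fin θ) : gen θ i ∈ homogTot θ 1 :=
  Submodule.subset_span ⟨[i], rfl, (wordElem_singleton i).symm⟩

/-- The weight of a word in two letters of degrees `1` and `m`. -/
def pairWeight (m : ℕ) (w : List (Fin 2)) : ℕ := (w.map ![1, m]).sum

lemma pairWeight_cons (m : ℕ) (s : Fin 2) (w : List (Fin 2)) :
    pairWeight m (s :: w) = ![1, m] s + pairWeight m w := by simp [pairWeight]

lemma length_le_pairWeight {m : ℕ} (hm : 2 ≤ m) (w : List (Fin 2)) :
    w.length ≤ pairWeight m w := by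
  induction w with
  | nil => simp
  | cons s w ih =>
    rw [pairWeight_cons, List.length_cons]
    have : 1 ≤ (![1, m] : Fin 2 → ℕ) s := by fin_cases s <;> simp; omega
    omega

lemma pairWeight_le {m : ℕ} (hm : 2 ≤ m) (w : List (Fin 2)) :
    pairWeight m w ≤ m * w.length := by
  induction w with
  | nil => simp [pairWeight]
  | cons s w ih =>
    rw [pairWeight_cons, List.length_cons, mul_add]
    have : (![1, m] : Fin 2 → ℕ) s ≤ m := by fin_cases s <;> simp; omega
    omega

lemma length_add_le_pairWeight {m : ℕ} (hm : 2 ≤ m) {w : List (Fin 2)} (hw : 1 ∈ w) :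
    w.length + m ≤ pairWeight m w + 1 := by
  induction w with
  | nil => simp at hw
  | cons s w ih =>
    rw [pairWeight_cons, List.length_cons]
    by_cases hs : s = 1
    · subst hs
      have := length_le_pairWeight hm w
      simp; omega
    · have h1 : 1 ∈ w := by
        rcases List.mem_cons.1 hw with h | h
        · exact absurd h.symm hs
        · exact h
      have hs0 : s = 0 := by omega
      subst hs0
      have := ih h1
      simp; omega

lemma subHom_pair_mem {m : ℕ} (a : Fin θ) {v : TV θ} (hv : v ∈ homogTot θ m)
    (w : List (Fin 2)) : subHom ![gen θ a, v] (wordElem 2 w) ∈ homogTot θ (pairWeight m w) := by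
  induction w with
  | nil => exact Submodule.subset_span ⟨[], rfl, by simp⟩
  | cons s w ih =>
    rw [wordElem_cons, map_mul, subHom_gen, pairWeight_cons]
    refine homogTot_mul ?_ ih
    fin_cases s
    · exact gen_mem_homogTot a
    · exact hv

lemma coeffW_nil_subHom {m : ℕ} (hm : 2 ≤ m) (a : Fin θ) {v : TV θ} (hv : v ∈ homogTot θ m)
    (f : TV 2) : coeffW [] (subHom ![gen θ a, v] f) = coeffW [] f := by
  induction f using word_induction with
  | zero => simp
  | add x y hx hy => simp only [map_add, hx, hy]
  | smul c x hx => simp only [map_smul, hx]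
  | word w =>
    rcases w with _ | ⟨s, w⟩
    · simp [coeffW_nil_one]
    · have h := length_le_pairWeight hm (s :: w)
      rw [coeffW_of_mem (subHom_pair_mem a hv (s :: w)), coeffW_word, if_neg (by simp)]
      simp at h ⊢; omega

lemma coeffW_singleton_subHom {m : ℕ} (hm : 2 ≤ m) (a : Fin θ) {v : TV θ}
    (hv : v ∈ homogTot θ m) (f : TV 2) :
    coeffW [a] (subHom ![gen θ a, v] f) = coeffW [0] f := by
  induction f using word_induction with
  | zero => simp
  | add x y hx hy => simp only [map_add, hx, hy]
  | smul c x hx => simp only [map_smul, hx]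
  | word w =>
    by_cases hw : w = [0]
    · subst hw
      rw [coeffW_word, if_pos rfl, wordElem_singleton, subHom_gen, Matrix.cons_val_zero,
        ← wordElem_singleton, coeffW_word, if_pos rfl]
    · have h : pairWeight m w ≠ 1 := by
        have := length_le_pairWeight hm w
        rcases w with _ | ⟨s, _ | ⟨t, w⟩⟩
        · simp [pairWeight]
        · have hs : s = 1 := by
            by_contra hs
            exact hw (by rw [show s = 0 by omega])
          subst hs
          simp [pairWeight]; omega
        · simp at this; omega
      rw [coeffW_of_mem (subHom_pair_mem a hv w) (by simpa using h.symm), coeffW_word, if_neg hw]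

lemma projTot_subHom {m : ℕ} (hm : 2 ≤ m) (a : Fin θ) {v : TV θ} (hv : v ∈ homogTot θ m)
    (f : TV 2) :
    ∃ c : ℂ, projTot m (subHom ![gen θ a, v] f) = coeffW [1] f • v + c • gen θ a ^ m := by
  induction f using word_induction with
  | zero => exact ⟨0, by simp⟩
  | add x y hx hy =>
    obtain ⟨c, hc⟩ := hx
    obtain ⟨e, he⟩ := hy
    exact ⟨c + e, by rw [map_add, map_add, map_add, hc, he]; module⟩
  | smul t x hx =>
    obtain ⟨c, hc⟩ := hx
    exact ⟨t * c, by rw [map_smul, map_smul, map_smul, hc]; simp only [smul_eq_mul]; module⟩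
  | word w =>
    by_cases hw : w = [1]
    · subst hw
      refine ⟨0, ?_⟩
      rw [coeffW_word, if_pos rfl, wordElem_singleton, subHom_gen]
      simp [projTot_of_mem m hv]
    · rw [coeffW_word, if_neg hw, zero_smul]
      by_cases h1 : 1 ∈ w
      · refine ⟨0, ?_⟩
        have h := length_add_le_pairWeight hm h1
        have hlen : w.length ≠ 1 := by
          intro hl
          obtain ⟨s, rfl⟩ := List.length_eq_one_iff.1 hl
          simp only [List.mem_singleton] at h1
          exact hw (by rw [h1])
        have hpos := List.length_pos_of_mem h1
        rw [projTot_of_mem m (subHom_pair_mem a hv w), if_neg (by omega)]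
        simp
      · obtain ⟨l, rfl⟩ : ∃ l, w = List.replicate l 0 := by
          refine ⟨w.length, List.eq_replicate_iff.2 ⟨rfl, fun b hb => ?_⟩⟩
          have : b ≠ 1 := fun h => h1 (h ▸ hb)
          omega
        have hmem (l : ℕ) : gen θ a ^ l ∈ homogTot θ l := by
          induction l with
          | zero => exact Submodule.subset_span ⟨[], rfl, by simp⟩
          | succ l ih => rw [pow_succ]; exact homogTot_mul ih (gen_mem_homogTot a)
        have heq : subHom ![gen θ a, v] (wordElem 2 (List.replicate l 0)) = gen θ a ^ l := by
          simp [wordElem]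
        rw [heq, projTot_of_mem m (hmem l)]
        by_cases hl : l = m
        · exact ⟨1, by simp [hl]⟩
        · exact ⟨0, by simp [hl]⟩

lemma pow_gen_mem_homogD (a : Fin θ) (m : ℕ) : gen θ a ^ m ∈ homogD θ (m • δ θ a) := by
  induction m with
  | zero => simpa using one_mem_homogD
  | succ m ih => rw [pow_succ, succ_nsmul]; exact homogD_mul ih (gen_mem_homogD a)

/-- In a pre-Nichols algebra, a nonzero homogeneous element whose braiding with `x_a` differs
from that of `x_a ^ m` is linearly independent of `x_a ^ m`. -/
lemma IsPreNicholsIdeal.eq_zero_of_smul_add_mem {S : BraidedStr θ q} {I : Submodule ℂ (TV θ)}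
    (hI : IsPreNicholsIdeal S I) (a : Fin θ) {d : Fin θ → ℕ} {v : TV θ} (hv : v ∈ homogD θ d)
    (hvI : v ∉ I) {m : ℕ}
    (hsep : qf q (δ θ a) d * qf q d (δ θ a) ≠ (q a a : ℂ) ^ (2 * m)) {b c : ℂ}
    (h : b • v + c • gen θ a ^ m ∈ I) : b = 0 := by
  have hL := hI.twistR_δ_mem a (hI.twistL_δ_mem a h)
  have hp := pow_gen_mem_homogD a m
  rw [map_add, map_smul, map_smul, twistL_of_mem _ _ hv, twistL_of_mem _ _ hp, map_add, map_smul,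
    map_smul, map_smul, map_smul, twistR_of_mem _ _ hv, twistR_of_mem _ _ hp, qf_nsmul_left,
    qf_nsmul_right, qf_δ_δ] at hL
  have hsub := sub_mem hL (I.smul_mem ((q a a : ℂ) ^ (2 * m)) h)
  have : (b * (qf q (δ θ a) d * qf q d (δ θ a) - (q a a : ℂ) ^ (2 * m))) • v ∈ I := by
    convert hsub using 1
    module
  by_contra hb
  exact hvI ((I.smul_mem_iff (mul_ne_zero hb (sub_ne_zero.2 hsep))).1 this)

lemma projTot_zero_eq (f : TV θ) : projTot 0 f = coeffW [] f • 1 := by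
  induction f using word_induction with
  | zero => simp
  | add x y hx hy => simp only [map_add, hx, hy, add_smul]
  | smul c x hx => simp only [map_smul, hx, smul_eq_mul, mul_smul]
  | word w =>
    rw [projTot_word, coeffW_word]
    rcases w with _ | ⟨s, w⟩ <;> simp

lemma projTot_one_eq (f : TV θ) : projTot 1 f = ∑ i, coeffW [i] f • gen θ i := by
  induction f using word_induction with
  | zero => simp
  | add x y hx hy => simp only [map_add, hx, hy, add_smul, Finset.sum_add_distrib]
  | smul c x hx => simp only [map_smul, hx, smul_eq_mul, mul_smul, Finset.smul_sum]
  | word w =>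
    simp only [projTot_word, coeffW_word]
    rcases w with _ | ⟨s, _ | ⟨t, w⟩⟩ <;> simp

lemma finiteDimensional_Wfil (n : ℕ) : FiniteDimensional ℂ (Wfil θ n) := by
  refine FiniteDimensional.span_of_finite ℂ ?_
  refine ((List.finite_length_le (Fin θ) n).image (wordElem θ)).subset ?_
  rintro _ ⟨w, hw, rfl⟩
  exact ⟨w, hw, rfl⟩

lemma finrank_map_le_of_ker_le {V M N : Type*} [AddCommGroup V] [Module ℂ V] [AddCommGroup M]
    [Module ℂ M] [AddCommGroup N] [Module ℂ N] (W : Submodule ℂ V) [FiniteDimensional ℂ W]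
    {f : V →ₗ[ℂ] M} {g : V →ₗ[ℂ] N} (h : LinearMap.ker f ≤ LinearMap.ker g) :
    Module.finrank ℂ (W.map g) ≤ Module.finrank ℂ (W.map f) := by
  have hf := (f.domRestrict W).finrank_range_add_finrank_ker
  have hg := (g.domRestrict W).finrank_range_add_finrank_ker
  have hker : LinearMap.ker (f.domRestrict W) ≤ LinearMap.ker (g.domRestrict W) := by
    intro x hx
    exact h (x := (x : V)) hx
  have := Submodule.finrank_mono hker
  rw [LinearMap.range_domRestrict] at hf hg
  omega

/-- A primitive element of degree at least two of a pre-Nichols algebra of finite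
Gelfand–Kirillov dimension, together with a generator, spans a braided vector space whose
Nichols algebra has finite Gelfand–Kirillov dimension. -/
theorem finGK_pair {S : BraidedStr θ q} {I : Submodule ℂ (TV θ)} (hI : IsPreNicholsIdeal S I)
    (hGK : FinGK I) (a : Fin θ) {d : Fin θ → ℕ} {v : TV θ} (hv : v ∈ homogD θ d)
    (hm : 2 ≤ ∑ k, d k) (hprim : IsPrimitiveMod S I v) (hvI : v ∉ I)
    (hsep : qf q (δ θ a) d * qf q d (δ θ a) ≠ (q a a : ℂ) ^ (2 * ∑ k, d k)) :
    FinGK (Jq (braidedStr (subMat q ![δ θ a, d]))) := by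
  set m := ∑ k, d k with hmdef
  set S' := braidedStr (subMat q ![δ θ a, d])
  have hvT : v ∈ homogTot θ m := homogD_le_homogTot d hv
  set φ : TV 2 →ₐ[ℂ] TV θ := subHom ![gen θ a, v] with hφ
  set K : Submodule ℂ (TV 2) := I.comap φ.toLinearMap with hK
  have hX : ∀ s, (![gen θ a, v] : Fin 2 → TV θ) s
      ∈ homogD θ ((![δ θ a, d] : Fin 2 → Fin θ → ℕ) s) := by
    intro s
    fin_cases s
    · exact gen_mem_homogD a
    · exact hv
  have hP : ∀ s, IsPrimitiveMod S I ((![gen θ a, v] : Fin 2 → TV θ) s) := by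
    intro s
    fin_cases s
    · simp [IsPrimitiveMod, S.Δ_gen]
    · exact hprim
  have hlow : ∀ f ∈ K, ∀ n < 2, projTot n f = 0 := by
    intro f hf n hn
    have hfI : φ f ∈ I := hf
    interval_cases n
    · rw [projTot_zero_eq, ← coeffW_nil_subHom hm a hvT, hI.coeffW_eq_zero (by simp) hfI,
        zero_smul]
    · obtain ⟨c, hc⟩ := projTot_subHom hm a hvT f
      have h1 : coeffW [1] f = 0 :=
        hI.eq_zero_of_smul_add_mem a hv hvI hsep (hc ▸ hI.projTot_mem m hfI)
      rw [projTot_one_eq, Fin.sum_univ_two, h1, ← coeffW_singleton_subHom hm a hvT,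
        hI.coeffW_eq_zero (by simp) hfI, zero_smul, zero_smul, add_zero]
  have hKJ : K ≤ Jq S' := by
    refine (le_homogenization K).trans (le_sSup ?_)
    refine homogenization_isPreNicholsIdeal S' ?_ ?_ ?_ hlow
    · intro b x hx
      change φ (b * x) ∈ I
      rw [map_mul]; exact hI.mul_left _ _ hx
    · intro b x hx
      change φ (x * b) ∈ I
      rw [map_mul]; exact hI.mul_right _ _ hx
    · exact fun x hx => comul_mem_of_subHom_mem S hI hX hP S' hx
  obtain ⟨C, e, hC⟩ := hGK
  refine ⟨C * m ^ e, e, fun n => ?_⟩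
  have := finiteDimensional_Wfil (θ := 2) n
  have := finiteDimensional_Wfil (θ := θ) (m * n)
  have hker : LinearMap.ker (I.mkQ ∘ₗ φ.toLinearMap) ≤ LinearMap.ker (Jq S').mkQ := by
    rw [LinearMap.ker_comp, Submodule.ker_mkQ, Submodule.ker_mkQ]; exact hKJ
  have hsub : (Wfil 2 n).map (I.mkQ ∘ₗ φ.toLinearMap) ≤ (Wfil θ (m * n)).map I.mkQ := by
    rw [Submodule.map_comp]
    refine Submodule.map_mono (Submodule.map_le_iff_le_comap.2 (Submodule.span_le.2 ?_))
    rintro _ ⟨w, hw, rfl⟩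
    refine Submodule.span_mono ?_ (subHom_pair_mem a hvT w)
    rintro _ ⟨u, hu, rfl⟩
    exact ⟨u, hu ▸ (pairWeight_le hm w).trans (Nat.mul_le_mul_left m hw), rfl⟩
  calc Module.finrank ℂ ((Wfil 2 n).map (Jq S').mkQ)
      ≤ Module.finrank ℂ ((Wfil 2 n).map (I.mkQ ∘ₗ φ.toLinearMap)) :=
        finrank_map_le_of_ker_le _ hker
    _ ≤ Module.finrank ℂ ((Wfil θ (m * n)).map I.mkQ) := Submodule.finrank_mono hsub
    _ ≤ C * (m * n + 1) ^ e := hC _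
    _ ≤ C * (m * (n + 1)) ^ e := by gcongr; nlinarith
    _ = C * m ^ e * (n + 1) ^ e := by rw [mul_pow]; ring

end PrimitivePair

section RankTwo

variable {θ : ℕ} {q : Fin θ → Fin θ → ℂˣ}

lemma qtil_comm (q : Fin θ → Fin θ → ℂˣ) (i j : Fin θ) : qtil q i j = qtil q j i := mul_comm _ _

/-- The diagram of the vertices `i, j` is labelled by `ζ ^ t.1`, `ζ ^ t.2.1`, `ζ ^ t.2.2`. -/
def HasExponents (ζ : ℂ) (q : Fin θ → Fin θ → ℂˣ) (i j : Fin θ) (t : ℕ × ℕ × ℕ) : Prop :=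
  (q i i : ℂ) = ζ ^ t.1 ∧ qtil q i j = ζ ^ t.2.1 ∧ (q j j : ℂ) = ζ ^ t.2.2

lemma mem_cSet_iff {ζ : ℂ} (hζ : IsPrimitiveRoot ζ 9) {i j : Fin θ} {a b : ℕ} (ha : ¬ 9 ∣ a)
    (hi : (q i i : ℂ) = ζ ^ a) (hb : qtil q i j = ζ ^ b) (n : ℕ) :
    n ∈ cSet q i j ↔ 9 ∣ a * (n + 1) ∨ 9 ∣ a * n + b := by
  have hne : ζ ^ a - 1 ≠ 0 := fun h => ha ((hζ.pow_eq_one_iff_dvd a).1 (sub_eq_zero.1 h))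
  have h1 : qnum (ζ ^ a) (n + 1) = 0 ↔ 9 ∣ a * (n + 1) := by
    rw [← hζ.pow_eq_one_iff_dvd, ← mul_left_inj' hne, qnum, geom_sum_mul, zero_mul, sub_eq_zero,
      ← pow_mul]
  have h2 : 1 - (ζ ^ a) ^ n * ζ ^ b = 0 ↔ 9 ∣ a * n + b := by
    rw [← hζ.pow_eq_one_iff_dvd, sub_eq_zero, ← pow_mul, ← pow_add, eq_comm]
  rw [cSet, Set.mem_ofPred_eq, hi, hb, mul_eq_zero, h1, h2]

lemma reflectMat_self (q : Fin θ → Fin θ → ℂˣ) (i : Fin θ) : reflectMat q i i i = q i i := by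
  simp only [reflectMat, cij, if_pos]
  group

lemma reflectMat_apply {i j : Fin θ} (hij : i ≠ j) :
    (reflectMat q i j j : ℂ)
      = q j j * qtil q i j ^ sInf (cSet q i j) * (q i i : ℂ) ^ (sInf (cSet q i j)) ^ 2 := by
  have h : reflectMat q i j j = q j j * (q i j * q j i) ^ sInf (cSet q i j)
      * q i i ^ (sInf (cSet q i j)) ^ 2 := by
    simp only [reflectMat, cij, if_neg hij, neg_neg, Int.ofNat_eq_natCast, zpow_natCast,
      neg_mul_neg, ← Nat.cast_mul, mul_pow, sq, pow_mul]
    rw [mul_comm (q i j ^ _), ← mul_assoc]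
  rw [h]
  simp [qtil]

lemma qtil_reflectMat {i j : Fin θ} (hij : i ≠ j) :
    qtil (reflectMat q i) i j * (qtil q i j * (q i i : ℂ) ^ (2 * sInf (cSet q i j))) = 1 := by
  have h : (reflectMat q i i j * reflectMat q i j i)
      * (q i j * q j i * q i i ^ (2 * sInf (cSet q i j))) = 1 := by
    simp only [reflectMat, cij, if_neg hij, if_true, neg_neg, Int.ofNat_eq_natCast]
    generalize q i i = x
    generalize q i j = y
    generalize q j i = z
    generalize sInf (cSet q i j) = m
    apply Units.ext
    have hx := x.ne_zero
    have hy := y.ne_zero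
    have hz := z.ne_zero
    push_cast
    simp only [zpow_neg, zpow_natCast, neg_mul, mul_neg, zpow_mul, zpow_ofNat]
    field_simp
    rw [pow_mul]
  simpa [qtil] using congrArg Units.val h

/-- How the exponents of a diagram with two vertices of ninth roots of unity change under the
reflection at the first vertex, where `m` is the opposite of the entry of the Cartan matrix. -/
def IsReflected (t t' : ℕ × ℕ × ℕ) (m : ℕ) : Prop :=
  ¬ 9 ∣ t.1 ∧ (9 ∣ t.1 * (m + 1) ∨ 9 ∣ t.1 * m + t.2.1) ∧
    (∀ n < m, ¬ (9 ∣ t.1 * (n + 1) ∨ 9 ∣ t.1 * n + t.2.1)) ∧ t'.1 = t.1 ∧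
    9 ∣ t'.2.1 + (t.2.1 + 2 * m * t.1) ∧ t'.2.2 % 9 = (t.2.2 + t.2.1 * m + t.1 * m ^ 2) % 9

instance (t t' : ℕ × ℕ × ℕ) (m : ℕ) : Decidable (IsReflected t t' m) := by
  unfold IsReflected; infer_instance

lemma HasExponents.reflect {ζ : ℂ} (hζ : IsPrimitiveRoot ζ 9) {i j : Fin θ} (hij : i ≠ j)
    {t t' : ℕ × ℕ × ℕ} {m : ℕ} (h : HasExponents ζ q i j t) (ht : IsReflected t t' m) :
    sInf (cSet q i j) = m ∧ HasExponents ζ (reflectMat q i) i j t' := by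
  obtain ⟨hi, hb, hj⟩ := h
  obtain ⟨ha, hm, hmin, h1, h2, h3⟩ := ht
  have hinf : sInf (cSet q i j) = m := by
    have hmem := (mem_cSet_iff hζ ha hi hb m).2 hm
    refine le_antisymm (Nat.sInf_le hmem) (le_of_not_gt fun hlt => ?_)
    exact hmin _ hlt ((mem_cSet_iff hζ ha hi hb _).1 (Nat.sInf_mem ⟨m, hmem⟩))
  refine ⟨hinf, ?_, ?_, ?_⟩
  · rw [reflectMat_self, hi, h1]
  · have hq := qtil_reflectMat (q := q) hij
    rw [hinf, hb, hi, ← pow_mul, ← pow_add, mul_comm t.1] at hq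
    have hz := (hζ.pow_eq_one_iff_dvd _).2 h2
    rw [pow_add] at hz
    exact mul_right_cancel₀ (right_ne_zero_of_mul_eq_one hz) (hq.trans hz.symm)
  · rw [reflectMat_apply hij, hinf, hb, hi, hj, ← pow_mul, ← pow_mul, ← pow_add, ← pow_add,
      ← pow_mod_orderOf, ← hζ.eq_orderOf, ← h3, hζ.eq_orderOf, pow_mod_orderOf]

lemma HasExponents.symm {ζ : ℂ} {i j : Fin θ} {t : ℕ × ℕ × ℕ} (h : HasExponents ζ q i j t) :
    HasExponents ζ q j i (t.2.2, t.2.1, t.1) :=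
  ⟨h.2.2, (qtil_comm q j i).trans h.2.1, h.1⟩

/-- A family of rank two diagrams, stable under reflections and under exchanging the vertices,
whose Cartan matrices are not of finite type. -/
def infiniteTable : Finset (ℕ × ℕ × ℕ) :=
  {(5, 3, 7), (7, 3, 5), (1, 7, 7), (7, 7, 1), (6, 5, 5), (5, 5, 6), (6, 7, 3), (3, 7, 6),
    (5, 8, 3), (3, 8, 5)}

lemma infiniteTable_symm : ∀ t ∈ infiniteTable, (t.2.2, t.2.1, t.1) ∈ infiniteTable := by decide

lemma infiniteTable_reflect :
    ∀ t ∈ infiniteTable, ∃ t' ∈ infiniteTable, ∃ m ∈ Finset.Icc 2 8, IsReflected t t' m := by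
  decide

lemma not_finiteRootSystem_of_stable {P : (Fin 2 → Fin 2 → ℂˣ) → Prop}
    (hP : ∀ q, P q → ∀ i j, i ≠ j → 2 ≤ sInf (cSet q i j) ∧ P (reflectMat q i))
    {q : Fin 2 → Fin 2 → ℂˣ} (hq : P q) : ¬ FiniteRootSystem q := by
  rintro ⟨-, hfin⟩
  have key (n : ℕ) : ∃ q' β i j, i ≠ j ∧ ReachRoot q q' β ∧ P q' ∧ β j < β i ∧ 0 < β i ∧
      (n : ℤ) ≤ β i := by
    induction n with
    | zero => exact ⟨q, _, 0, 1, by simp, .simple 0, hq, by simp⟩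
    | succ n ih =>
      obtain ⟨q', β, i, j, hij, hβ, hq', hlt, hpos, hn⟩ := ih
      obtain ⟨h2, hr⟩ := hP q' hq' j i hij.symm
      have hj : sRefl q' j β j = sInf (cSet q' j i) * β i - β j := by
        have hsum : ∑ k, cij q' j k * β k = cij q' j i * β i + cij q' j j * β j := by
          have huniv : ∀ i j : Fin 2, i ≠ j → Finset.univ = {i, j} := by decide
          rw [huniv i j hij, Finset.sum_pair hij]
        rw [sRefl, if_pos rfl, hsum, cij, cij, if_pos rfl, if_neg hij.symm, Int.ofNat_eq_natCast]
        ring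
      have hi : sRefl q' j β i = β i := by simp [sRefl, hij]
      have h2' : (2 : ℤ) ≤ sInf (cSet q' j i) := by exact_mod_cast h2
      have hgt : β i < sRefl q' j β j := by rw [hj]; nlinarith
      refine ⟨_, _, j, i, hij.symm, .reflect j hβ, hr, by rwa [hi], hpos.trans hgt, ?_⟩
      push_cast
      omega
  obtain ⟨B, hB⟩ := (hfin.image fun β => max (β 0) (β 1)).bddAbove
  obtain ⟨q', β, i, j, -, hβ, -, -, -, hn⟩ := key (B.toNat + 1)
  have hle : max (β 0) (β 1) ≤ B := hB ⟨β, ⟨q', hβ⟩, rfl⟩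
  have : β i ≤ max (β 0) (β 1) := by fin_cases i <;> simp
  push_cast at hn
  have := Int.self_le_toNat B
  omega

theorem not_finiteRootSystem {ζ : ℂ} (hζ : IsPrimitiveRoot ζ 9) {q : Fin 2 → Fin 2 → ℂˣ}
    {t : ℕ × ℕ × ℕ} (ht : t ∈ infiniteTable) (hq : HasExponents ζ q 0 1 t) :
    ¬ FiniteRootSystem q := by
  refine not_finiteRootSystem_of_stable
    (P := fun q => ∃ t ∈ infiniteTable, HasExponents ζ q 0 1 t) ?_ ⟨t, ht, hq⟩
  rintro q ⟨t, ht, hq⟩ i j hij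
  suffices h : ∃ t ∈ infiniteTable, HasExponents ζ q i j t by
    obtain ⟨t, ht, hq⟩ := h
    obtain ⟨t', ht', m, hm, hr⟩ := infiniteTable_reflect t ht
    obtain ⟨hinf, hexp⟩ := hq.reflect hζ hij hr
    refine ⟨hinf ▸ (Finset.mem_Icc.1 hm).1, ?_⟩
    fin_cases i <;> fin_cases j
    · exact absurd rfl hij
    · exact ⟨t', ht', hexp⟩
    · exact ⟨_, infiniteTable_symm t' ht', hexp.symm⟩
    · exact absurd rfl hij
  fin_cases i <;> fin_cases j
  · exact absurd rfl hij
  · exact ⟨t, ht, hq⟩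
  · exact ⟨_, infiniteTable_symm t ht, hq.symm⟩
  · exact absurd rfl hij

end RankTwo

section BracketCoproduct

variable {θ : ℕ} {q : Fin θ → Fin θ → ℂˣ}

/-- The operator on `T(V) ⊗ T(V)` which describes the coproduct of `[f, x_a]_c` in terms of the
coproduct of `f`, for `f` of degree `d`. -/
def bracketOp (S : BraidedStr θ q) (d : Fin θ → ℕ) (a : Fin θ) :
    TV θ ⊗[ℂ] TV θ →ₗ[ℂ] TV θ ⊗[ℂ] TV θ :=
  S.mulB.flip (S.Δ (gen θ a)) - qf q d (δ θ a) • S.mulB (S.Δ (gen θ a))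

lemma comul_brk (S : BraidedStr θ q) (d : Fin θ → ℕ) (a : Fin θ) (f : TV θ) :
    S.Δ (brk q d (δ θ a) f (gen θ a)) = bracketOp S d a (S.Δ f) := by
  simp [brk, bracketOp, S.Δ_mul]

lemma bracketOp_tmul (S : BraidedStr θ q) {d d₁ d₂ : Fin θ → ℕ} (a : Fin θ) {s t : TV θ}
    (hs : s ∈ homogD θ d₁) (ht : t ∈ homogD θ d₂) (hd : d₁ + d₂ = d) :
    bracketOp S d a (s ⊗ₜ t)
      = qf q d₂ (δ θ a) • (brk q d₁ (δ θ a) s (gen θ a) ⊗ₜ t) + s ⊗ₜ (t * gen θ a)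
        - (qf q d₂ (δ θ a) * (qf q d₁ (δ θ a) * qf q (δ θ a) d₁)) • (s ⊗ₜ (gen θ a * t)) := by
  subst hd
  simp only [bracketOp, LinearMap.sub_apply, LinearMap.flip_apply, LinearMap.smul_apply, S.Δ_gen,
    map_add, LinearMap.add_apply, mulB_gen_tmul, mulB_one_tmul, mulB_tmul_one, mulB_tmul_gen,
    twistL_of_mem q _ hs, twistR_of_mem q _ ht, mul_one, one_mul, brk, qf_add_left,
    TensorProduct.sub_tmul, TensorProduct.tmul_smul, ← TensorProduct.smul_tmul']
  module

lemma bracketOp_one_tmul (S : BraidedStr θ q) (d : Fin θ → ℕ) (a : Fin θ) {t : TV θ}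
    (ht : t ∈ homogD θ d) :
    bracketOp S d a (1 ⊗ₜ t) = 1 ⊗ₜ brk q d (δ θ a) t (gen θ a) := by
  rw [bracketOp_tmul S a one_mem_homogD ht (zero_add d)]
  simp [brk, TensorProduct.tmul_sub]

lemma bracketOp_tmul_one (S : BraidedStr θ q) (d : Fin θ → ℕ) (a : Fin θ) {s : TV θ}
    (hs : s ∈ homogD θ d) :
    bracketOp S d a (s ⊗ₜ 1) = brk q d (δ θ a) s (gen θ a) ⊗ₜ 1
      + (1 - qf q d (δ θ a) * qf q (δ θ a) d) • (s ⊗ₜ gen θ a) := by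
  rw [bracketOp_tmul S a hs one_mem_homogD (add_zero d)]
  simp only [qf_zero_left, one_smul, one_mul, mul_one]
  module

lemma IsPreNicholsIdeal.comul_brk_sub_mem {S : BraidedStr θ q} {I : Submodule ℂ (TV θ)}
    (hI : IsPreNicholsIdeal S I) (d : Fin θ → ℕ) (a : Fin θ) {f : TV θ} {M : TV θ ⊗[ℂ] TV θ}
    (h : S.Δ f - M ∈ mixedSub I) :
    S.Δ (brk q d (δ θ a) f (gen θ a)) - bracketOp S d a M ∈ mixedSub I := by
  rw [comul_brk, ← map_sub]
  exact sub_mem (hI.mulB_mem_left _ h) (Submodule.smul_mem _ _ (hI.mulB_mem_right _ h))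

lemma IsPreNicholsIdeal.brk_sub_mem {S : BraidedStr θ q} {I : Submodule ℂ (TV θ)}
    (hI : IsPreNicholsIdeal S I) (d e : Fin θ → ℕ) {f g : TV θ} (h : f - g ∈ I) (y : TV θ) :
    brk q d e f y - brk q d e g y ∈ I := by
  have := sub_mem (hI.mul_right y _ h) (I.smul_mem (qf q d e) (hI.mul_left y _ h))
  rw [sub_mul, mul_sub] at this
  rw [brk, brk]
  convert this using 1
  module

lemma comul_brk_gen (S : BraidedStr θ q) (i j : Fin θ) :
    S.Δ (brk q (δ θ i) (δ θ j) (gen θ i) (gen θ j))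
      = brk q (δ θ i) (δ θ j) (gen θ i) (gen θ j) ⊗ₜ 1
        + 1 ⊗ₜ brk q (δ θ i) (δ θ j) (gen θ i) (gen θ j)
        + (1 - q i j * q j i : ℂ) • (gen θ i ⊗ₜ gen θ j) := by
  rw [comul_brk, S.Δ_gen, map_add, bracketOp_tmul_one S _ _ (gen_mem_homogD i),
    bracketOp_one_tmul S _ _ (gen_mem_homogD i), qf_δ_δ, qf_δ_δ]
  module

lemma isPrimitiveMod_brk_gen (S : BraidedStr θ q) (I : Submodule ℂ (TV θ)) {i j : Fin θ}
    (h : (q i j * q j i : ℂ) = 1) :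
    IsPrimitiveMod S I (brk q (δ θ i) (δ θ j) (gen θ i) (gen θ j)) := by
  rw [IsPrimitiveMod, comul_brk_gen, h]
  simp

lemma isPrimitiveMod_brk_brk_gen (S : BraidedStr θ q) (I : Submodule ℂ (TV θ)) {i j : Fin θ}
    (h : (q i j * q j i * q j j : ℂ) = 1) :
    IsPrimitiveMod S I (brk q (δ θ i + δ θ j) (δ θ j)
      (brk q (δ θ i) (δ θ j) (gen θ i) (gen θ j)) (gen θ j)) := by
  have hE := brk_mem_homogD q (gen_mem_homogD i) (gen_mem_homogD j)
  rw [IsPrimitiveMod, comul_brk, comul_brk_gen, map_add, map_add, map_smul,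
    bracketOp_tmul_one S _ _ hE, bracketOp_one_tmul S _ _ hE,
    bracketOp_tmul S j (gen_mem_homogD i) (gen_mem_homogD j) rfl]
  simp only [qf_add_left, qf_add_right, qf_δ_δ]
  generalize (q i j : ℂ) = a at *
  generalize (q j i : ℂ) = b at *
  generalize (q j j : ℂ) = p at *
  convert zero_mem (mixedSub I) using 1
  match_scalars <;> grind

end BracketCoproduct

section Quotient

variable {θ : ℕ} {q : Fin θ → Fin θ → ℂˣ}

/-- A pre-Nichols algebra as a quotient algebra of `T(V)`. -/
lemma IsPreNicholsIdeal.exists_quotient {S : BraidedStr θ q} {I : Submodule ℂ (TV θ)}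
    (hI : IsPreNicholsIdeal S I) :
    ∃ (A : Type) (_ : Ring A) (_ : Algebra ℂ A) (π : TV θ →ₐ[ℂ] A), ∀ x, x ∈ I ↔ π x = 0 := by
  let J : TwoSidedIdeal (TV θ) := TwoSidedIdeal.mk' I (zero_mem I) (fun hx hy => add_mem hx hy)
    (fun hx => neg_mem hx) (fun hy => hI.mul_left _ _ hy) (fun hx => hI.mul_right _ _ hx)
  refine ⟨J.ringCon.Quotient, inferInstance, inferInstance, J.ringCon.mkₐ ℂ, fun x => ?_⟩
  have h : x ∈ I ↔ x ∈ J := (TwoSidedIdeal.mem_mk' _ _ _ _ _ _ x).symm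
  rw [h, TwoSidedIdeal.mem_iff]
  exact (RingCon.eq _).symm

/-- The consequence of `[x, z]_c = 0` and `[[z, y]_c, y]_c = 0` in degree `(1, 2, 1)`. -/
lemma brk_relation_left {A : Type*} [Ring A] [Algebra ℂ A] {x y z f w v : A}
    {ζ a b b' c e e' : ℂ} (hζ : ζ ^ 6 + ζ ^ 3 + 1 = 0) (hb : b * b' = ζ ^ 4) (he : e * e' = 1)
    (hc : c * (1 + ζ ^ 4) = b) (hxz : x * z - e • (z * x) = 0)
    (hzy : (z * y - b' • (y * z)) * y - (b' * ζ ^ 5) • (y * (z * y - b' • (y * z))) = 0)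
    (hw : w = (x * y - a • (y * x)) * z - (e * b) • (z * (x * y - a • (y * x))))
    (hv : v = w * y - (a * ζ ^ 5 * b') • (y * w))
    (hf : f = (x * y - a • (y * x)) * y - (a * ζ ^ 5) • (y * (x * y - a • (y * x)))) :
    (1 - ζ ^ 2 - c * (1 - ζ ^ 7 + (1 - ζ ^ 4) * ζ ^ 6) * b') • v
      + ((1 - ζ ^ 4) * b' * ζ ^ 6) • (f * z - (e * b * b) • (z * f)) = 0 := by
  have hzx : z * x = e' • (x * z) := by
    rw [sub_eq_zero.1 hxz, smul_smul, mul_comm e', he, one_smul]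
  have hzx' (t : A) : z * (x * t) = e' • (x * (z * t)) := by
    rw [← mul_assoc, hzx, smul_mul_assoc, mul_assoc]
  simp only [mul_sub, sub_mul, mul_smul_comm, smul_mul_assoc, mul_assoc] at hzy
  have hzyy : z * (y * y)
      = (b' * (1 + ζ ^ 5)) • (y * (z * y)) - (b' ^ 2 * ζ ^ 5) • (y * (y * z)) := by
    rw [← sub_eq_zero, ← hzy]
    module
  have hzyy' (s : A) : z * (y * (y * s))
      = (b' * (1 + ζ ^ 5)) • (y * (z * (y * s))) - (b' ^ 2 * ζ ^ 5) • (y * (y * (z * s))) := by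
    rw [← mul_assoc y y s, ← mul_assoc z, hzyy]
    simp only [sub_mul, smul_mul_assoc, mul_assoc]
  subst hf hv hw
  simp only [mul_sub, sub_mul, mul_smul_comm, smul_mul_assoc, mul_assoc, hzx, hzx', hzyy,
    hzyy']
  clear hxz hzx hzx' hzy hzyy hzyy'
  match_scalars <;> grind

/-- The consequence of `[[z, y]_c, y]_c = 0` in degree `(2, 2)`. -/
lemma brk_relation_right {A : Type*} [Ring A] [Algebra ℂ A] {y z t u : A}
    {ζ b b' c : ℂ} (hζ : ζ ^ 6 + ζ ^ 3 + 1 = 0) (hb : b * b' = ζ ^ 4)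
    (hc : c * (1 + ζ ^ 4) = b)
    (hzy : (z * y - b' • (y * z)) * y - (b' * ζ ^ 5) • (y * (z * y - b' • (y * z))) = 0)
    (ht : t = y * z * y - (b' * ζ ^ 13) • (y * (y * z))
      - b • (z * y * y - (b' * ζ ^ 13) • (y * (z * y))))
    (hu : u = y * z * z - (b * ζ ^ 6) • (z * (y * z))
      - b • (z * y * z - (b * ζ ^ 6) • (z * (z * y)))) :
    t * z - (b * b * ζ ^ 6) • (z * t) - c • (u * y - (b' * b' * ζ ^ 13) • (y * u)) = 0 := by
  simp only [mul_sub, sub_mul, mul_smul_comm, smul_mul_assoc, mul_assoc] at hzy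
  have hzyy : z * (y * y)
      = (b' * (1 + ζ ^ 5)) • (y * (z * y)) - (b' ^ 2 * ζ ^ 5) • (y * (y * z)) := by
    rw [← sub_eq_zero, ← hzy]
    module
  have hzyy' (s : A) : z * (y * (y * s))
      = (b' * (1 + ζ ^ 5)) • (y * (z * (y * s))) - (b' ^ 2 * ζ ^ 5) • (y * (y * (z * s))) := by
    rw [← mul_assoc y y s, ← mul_assoc z, hzyy]
    simp only [sub_mul, smul_mul_assoc, mul_assoc]
  subst ht hu
  simp only [mul_sub, sub_mul, mul_smul_comm, smul_mul_assoc, mul_assoc, hzyy, hzyy']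
  match_scalars <;> grind

end Quotient

section Relations

variable {θ : ℕ} {q : Fin θ → Fin θ → ℂˣ} {S : BraidedStr θ q} {I : Submodule ℂ (TV θ)}

/-- A homogeneous element which is primitive in a pre-Nichols algebra of finite GKdim vanishes
if together with some generator it spans a braided vector space with infinite root system. -/
lemma mem_of_isPrimitiveMod (hAAH : AAH) (hI : IsPreNicholsIdeal S I) (hGK : FinGK I) {ζ : ℂ}
    (hζ : IsPrimitiveRoot ζ 9) (a : Fin θ) {d : Fin θ → ℕ} {v : TV θ} (hv : v ∈ homogD θ d)
    (hm : 2 ≤ ∑ k, d k) (hprim : IsPrimitiveMod S I v) {t : ℕ × ℕ × ℕ} (ht : t ∈ infiniteTable)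
    (haa : (q a a : ℂ) = ζ ^ t.1) (had : qf q (δ θ a) d * qf q d (δ θ a) = ζ ^ t.2.1)
    (hdd : qf q d d = ζ ^ t.2.2) (hsep : t.2.1 % 9 ≠ t.1 * (2 * ∑ k, d k) % 9) : v ∈ I := by
  by_contra hvI
  have hfin := hAAH _ _ _ (finGK_pair hI hGK a hv hm hprim hvI ?_)
  · exact absurd hfin (not_finiteRootSystem hζ ht
      ⟨by simpa [subMat, qf_δ_δ] using haa, by simpa [qtil, subMat] using had,
        by simpa [subMat] using hdd⟩)
  · rw [had, haa, ← pow_mul]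
    intro h
    rw [← Nat.div_add_mod t.2.1 9, ← Nat.div_add_mod (t.1 * (2 * ∑ k, d k)) 9, pow_add, pow_add,
      pow_mul, pow_mul, hζ.pow_eq_one, one_pow, one_pow, one_mul, one_mul] at h
    exact hsep (hζ.pow_inj (Nat.mod_lt _ (by norm_num)) (Nat.mod_lt _ (by norm_num)) h)

lemma sum_δ (i : Fin θ) : ∑ k, δ θ i k = 1 := by simp [δ]

/-- The braiding matrix in terms of a primitive ninth root of unity `ζ = q_{ii}`. -/
structure NinthRootBraiding (q : Fin θ → Fin θ → ℂˣ) (i j k : Fin θ) (ζ : ℂ) : Prop where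
  prim : IsPrimitiveRoot ζ 9
  ii : (q i i : ℂ) = ζ
  jj : (q j j : ℂ) = ζ ^ 5
  kk : (q k k : ℂ) = ζ ^ 6
  ij : (q i j : ℂ) * q j i = ζ ^ 8
  jk : (q j k : ℂ) * q k j = ζ ^ 4
  ik : (q i k : ℂ) * q k i = 1

lemma cyclotomic_nine {ζ : ℂ} (hζ : IsPrimitiveRoot ζ 9) : ζ ^ 6 + ζ ^ 3 + 1 = 0 := by
  have h3 : ζ ^ 3 - 1 ≠ 0 := sub_ne_zero.2 (hζ.pow_ne_one_of_pos_of_lt (by norm_num) (by norm_num))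
  refine (mul_eq_zero.1 ?_).resolve_left h3
  linear_combination hζ.pow_eq_one

namespace NinthRootBraiding

variable {i j k : Fin θ} {ζ : ℂ}

lemma brk_ik_mem (h : NinthRootBraiding q i j k ζ) (hAAH : AAH) (hI : IsPreNicholsIdeal S I)
    (hGK : FinGK I) :
    brk q (δ θ i) (δ θ k) (gen θ i) (gen θ k) ∈ I := by
  have h9 := h.prim.pow_eq_one
  refine mem_of_isPrimitiveMod (t := (5, 3, 7)) hAAH hI hGK h.prim j
    (brk_mem_homogD q (gen_mem_homogD i) (gen_mem_homogD k)) ?_ (isPrimitiveMod_brk_gen S I h.ik)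
    (by decide) h.jj ?_ ?_ ?_
  all_goals simp only [Pi.add_apply, Finset.sum_add_distrib, sum_δ, qf_add_left, qf_add_right,
    qf_δ_δ, h.ii, h.kk]
  · norm_num
  · linear_combination (q j k * q k j : ℂ) * h.ij + ζ ^ 8 * h.jk + ζ ^ 3 * h9
  · linear_combination ζ ^ 7 * h.ik
  · norm_num

lemma brk_kjj_mem (h : NinthRootBraiding q i j k ζ) (hAAH : AAH) (hI : IsPreNicholsIdeal S I)
    (hGK : FinGK I) :
    brk q (δ θ k + δ θ j) (δ θ j) (brk q (δ θ k) (δ θ j) (gen θ k) (gen θ j)) (gen θ j) ∈ I := by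
  have h9 := h.prim.pow_eq_one
  refine mem_of_isPrimitiveMod (t := (1, 7, 7)) hAAH hI hGK h.prim i
    (brk_mem_homogD q (brk_mem_homogD q (gen_mem_homogD k) (gen_mem_homogD j))
      (gen_mem_homogD j)) ?_ (isPrimitiveMod_brk_brk_gen S I ?_) (by decide) (by simp [h.ii])
      ?_ ?_ ?_
  all_goals simp only [Pi.add_apply, Finset.sum_add_distrib, sum_δ, qf_add_left, qf_add_right,
    qf_δ_δ, h.jj, h.kk]
  · norm_num
  · linear_combination ζ ^ 5 * h.jk + h9
  · linear_combination (q i k * q k i : ℂ) * (q i j * q j i + ζ ^ 8) * h.ij + ζ ^ 16 * h.ik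
      + ζ ^ 7 * h9
  · linear_combination (ζ ^ 26) * (q j k * q k j + ζ ^ 4) * h.jk + ζ ^ 7 * (ζ ^ 18 + ζ ^ 9 + 1) * h9
  · norm_num

end NinthRootBraiding

end Relations

section Coproducts

variable {θ : ℕ} {q : Fin θ → Fin θ → ℂˣ} {S : BraidedStr θ q} {I : Submodule ℂ (TV θ)}

lemma sub_mem_of_sub_mem_smul {M : Type*} [AddCommGroup M] [Module ℂ M] {P : Submodule ℂ M}
    {x y z r : M} (c : ℂ) (h : x - y ∈ P) (hr : r ∈ P) (hz : y = z + c • r) : x - z ∈ P := by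
  have := add_mem h (P.smul_mem c hr)
  rwa [hz, ← sub_sub, sub_add_cancel] at this

namespace NinthRootBraiding

variable {i j k : Fin θ} {ζ : ℂ}

/-- `[[x_i, x_j]_c, x_k]_c`. -/
def elemIJK (q : Fin θ → Fin θ → ℂˣ) (i j k : Fin θ) : TV θ :=
  brk q (δ θ i + δ θ j) (δ θ k) (brk q (δ θ i) (δ θ j) (gen θ i) (gen θ j)) (gen θ k)

lemma elemIJK_mem (q : Fin θ → Fin θ → ℂˣ) (i j k : Fin θ) :
    elemIJK q i j k ∈ homogD θ (δ θ i + δ θ j + δ θ k) :=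
  brk_mem_homogD q (brk_mem_homogD q (gen_mem_homogD i) (gen_mem_homogD j)) (gen_mem_homogD k)

lemma comul_elemIJK (h : NinthRootBraiding q i j k ζ) (hI : IsPreNicholsIdeal S I)
    (hik : brk q (δ θ i) (δ θ k) (gen θ i) (gen θ k) ∈ I) :
    S.Δ (elemIJK q i j k) - (elemIJK q i j k ⊗ₜ 1 + 1 ⊗ₜ elemIJK q i j k
      + (1 - ζ ^ 4) • (brk q (δ θ i) (δ θ j) (gen θ i) (gen θ j) ⊗ₜ gen θ k)
      + (1 - ζ ^ 8) • (gen θ i ⊗ₜ (gen θ j * gen θ k))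
      - ((1 - ζ ^ 8) * q j k) • (gen θ i ⊗ₜ (gen θ k * gen θ j))) ∈ mixedSub I := by
  have hE := brk_mem_homogD q (gen_mem_homogD i) (gen_mem_homogD j)
  refine sub_mem_of_sub_mem_smul ((1 - ζ ^ 8) * q j k)
    (hI.comul_brk_sub_mem (δ θ i + δ θ j) k (by rw [comul_brk_gen, sub_self]; exact zero_mem _))
    (tmul_mem_mixedSub_left (gen θ j) hik) ?_
  rw [elemIJK, map_add, map_add, map_smul, bracketOp_tmul_one S _ _ hE,
    bracketOp_one_tmul S _ _ hE,
    bracketOp_tmul S k (gen_mem_homogD i) (gen_mem_homogD j) rfl]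
  simp only [qf_add_left, qf_add_right, qf_δ_δ]
  have h1 := h.ij
  have h2 := h.jk
  have h3 := h.ik
  match_scalars <;> grind

lemma comul_elemIJKJ (h : NinthRootBraiding q i j k ζ) (hI : IsPreNicholsIdeal S I)
    (hik : brk q (δ θ i) (δ θ k) (gen θ i) (gen θ k) ∈ I) {X Y Z E F W V : TV θ}
    (hX : X = gen θ i) (hY : Y = gen θ j) (hZ : Z = gen θ k) (hE : E = brk q (δ θ i) (δ θ j) X Y)
    (hF : F = brk q (δ θ i + δ θ j) (δ θ j) E Y) (hW : W = elemIJK q i j k)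
    (hV : V = brk q (δ θ i + δ θ j + δ θ k) (δ θ j) W Y) :
    S.Δ V - (V ⊗ₜ 1 + 1 ⊗ₜ V + (1 - ζ ^ 4) • (W ⊗ₜ Y)
      + ((1 - ζ ^ 4) * q k j) • (F ⊗ₜ Z)
      + ((1 - ζ ^ 4) - (1 - ζ ^ 8) * ζ ^ 9) • (E ⊗ₜ (Z * Y))
      + (((1 - ζ ^ 8) * ζ ^ 5 - (1 - ζ ^ 4)) * q k j) • (E ⊗ₜ (Y * Z))
      + (1 - ζ ^ 8) • (X ⊗ₜ (Y * Z * Y - (q k j * ζ ^ 13 : ℂ) • (Y * (Y * Z))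
        - (q j k : ℂ) • (Z * Y * Y - (q k j * ζ ^ 13 : ℂ) • (Y * (Z * Y)))))) ∈ mixedSub I := by
  have hd := brk_mem_homogD q (gen_mem_homogD i) (gen_mem_homogD j)
  have hWd := elemIJK_mem q i j k
  have hmul (a b : Fin θ) := homogD_mul (gen_mem_homogD a) (gen_mem_homogD b)
  have key := hI.comul_brk_sub_mem (δ θ i + δ θ j + δ θ k) j (h.comul_elemIJK hI hik)
  rw [map_sub, map_add, map_add, map_add, map_smul, map_smul, map_smul,
    bracketOp_tmul_one S _ _ hWd, bracketOp_one_tmul S _ _ hWd,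
    bracketOp_tmul S j hd (gen_mem_homogD k) rfl,
    bracketOp_tmul S j (gen_mem_homogD i) (hmul j k) (by abel),
    bracketOp_tmul S j (gen_mem_homogD i) (hmul k j) (by abel)] at key
  rw [← hX, ← hY, ← hZ, ← hE, ← hF, ← hW, ← hV] at key
  convert key using 2
  simp only [qf_add_left, qf_add_right, qf_δ_δ, TensorProduct.tmul_sub, TensorProduct.tmul_smul,
    h.jj, mul_assoc]
  have h1 := h.ij
  have h2 := h.jk
  have h3 := h.ik
  have h9 := cyclotomic_nine h.prim
  clear hX hY hZ hE hF hW hV key hmul hd hWd hik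
  match_scalars <;> grind

lemma comul_elemIJKK (h : NinthRootBraiding q i j k ζ) (hI : IsPreNicholsIdeal S I)
    (hik : brk q (δ θ i) (δ θ k) (gen θ i) (gen θ k) ∈ I) {X Y Z E W V : TV θ}
    (hX : X = gen θ i) (hY : Y = gen θ j) (hZ : Z = gen θ k) (hE : E = brk q (δ θ i) (δ θ j) X Y)
    (hW : W = elemIJK q i j k)
    (hV : V = brk q (δ θ i + δ θ j + δ θ k) (δ θ k) W Z) :
    S.Δ V - (V ⊗ₜ 1 + 1 ⊗ₜ V + (1 - ζ ^ 7 + (1 - ζ ^ 4) * ζ ^ 6) • (W ⊗ₜ Z)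
      + ((1 - ζ ^ 4) * (1 - ζ ^ 10)) • (E ⊗ₜ (Z * Z))
      + (1 - ζ ^ 8) • (X ⊗ₜ (Y * Z * Z - (q j k * ζ ^ 6 : ℂ) • (Z * (Y * Z))
        - (q j k : ℂ) • (Z * Y * Z - (q j k * ζ ^ 6 : ℂ) • (Z * (Z * Y)))))) ∈ mixedSub I := by
  have hd := brk_mem_homogD q (gen_mem_homogD i) (gen_mem_homogD j)
  have hWd := elemIJK_mem q i j k
  have hWe : brk q (δ θ i + δ θ j) (δ θ k) E Z = W := by rw [hW, elemIJK, hE, hX, hY, hZ]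
  have hmul (a b : Fin θ) := homogD_mul (gen_mem_homogD a) (gen_mem_homogD b)
  have key := hI.comul_brk_sub_mem (δ θ i + δ θ j + δ θ k) k (h.comul_elemIJK hI hik)
  rw [map_sub, map_add, map_add, map_add, map_smul, map_smul, map_smul,
    bracketOp_tmul_one S _ _ hWd, bracketOp_one_tmul S _ _ hWd,
    bracketOp_tmul S k hd (gen_mem_homogD k) rfl,
    bracketOp_tmul S k (gen_mem_homogD i) (hmul j k) (by abel),
    bracketOp_tmul S k (gen_mem_homogD i) (hmul k j) (by abel)] at key
  rw [← hX, ← hY, ← hZ, ← hE, ← hW, ← hV, hWe] at key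
  refine sub_mem_of_sub_mem_smul ((1 - ζ ^ 8) * (q j k * ζ ^ 6)) key
    (tmul_mem_mixedSub_left (Y * Z - (q j k : ℂ) • (Z * Y)) hik) ?_
  rw [← hX, ← hZ]
  simp only [qf_add_left, qf_add_right, qf_δ_δ, TensorProduct.tmul_sub, TensorProduct.tmul_smul,
    h.kk, mul_assoc]
  have h1 := h.ij
  have h2 := h.jk
  have h3 := h.ik
  have h9 := cyclotomic_nine h.prim
  clear hX hY hZ hE hW hV key hmul hd hWd hik hWe
  match_scalars <;> grind

end NinthRootBraiding

end Coproducts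

section Primitive

variable {θ : ℕ} {q : Fin θ → Fin θ → ℂˣ} {S : BraidedStr θ q} {I : Submodule ℂ (TV θ)}

namespace NinthRootBraiding

variable {i j k : Fin θ} {ζ : ℂ}

/-- `[[w, x_j]_c, x_k]_c - c [[w, x_k]_c, x_j]_c` for `w` of degree
`α_i + α_j + α_k`. -/
def relElem (q : Fin θ → Fin θ → ℂˣ) (i j k : Fin θ) (c : ℂ) (w : TV θ) : TV θ :=
  brk q (δ θ i + δ θ j + δ θ k + δ θ j) (δ θ k)
      (brk q (δ θ i + δ θ j + δ θ k) (δ θ j) w (gen θ j)) (gen θ k) -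
    c • brk q (δ θ i + δ θ j + δ θ k + δ θ k) (δ θ j)
      (brk q (δ θ i + δ θ j + δ θ k) (δ θ k) w (gen θ k)) (gen θ j)

lemma relElem_mem (q : Fin θ → Fin θ → ℂˣ) (i j k : Fin θ) (c : ℂ) :
    relElem q i j k c (elemIJK q i j k) ∈ homogD θ (δ θ i + δ θ j + δ θ k + δ θ j + δ θ k) := by
  have hW := elemIJK_mem q i j k
  refine sub_mem (brk_mem_homogD q (brk_mem_homogD q hW (gen_mem_homogD j)) (gen_mem_homogD k))
    (Submodule.smul_mem _ _ ?_)
  rw [add_right_comm _ (δ θ j) (δ θ k)]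
  exact brk_mem_homogD q (brk_mem_homogD q hW (gen_mem_homogD k)) (gen_mem_homogD j)

lemma isPrimitiveMod_relElem (h : NinthRootBraiding q i j k ζ) (hI : IsPreNicholsIdeal S I)
    (hik : brk q (δ θ i) (δ θ k) (gen θ i) (gen θ k) ∈ I)
    (hkjj : brk q (δ θ k + δ θ j) (δ θ j) (brk q (δ θ k) (δ θ j) (gen θ k) (gen θ j)) (gen θ j)
      ∈ I) {c : ℂ} (hc : c * (1 + ζ ^ 4) = q j k) :
    IsPrimitiveMod S I (relElem q i j k c (elemIJK q i j k)) := by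
  have hEd := brk_mem_homogD q (gen_mem_homogD i) (gen_mem_homogD j)
  have hFd := brk_mem_homogD q hEd (gen_mem_homogD j)
  have hWd := elemIJK_mem q i j k
  have hVd := brk_mem_homogD q hWd (gen_mem_homogD j)
  have hVd' := brk_mem_homogD q hWd (gen_mem_homogD k)
  have hword (a b c : Fin θ) (e : Fin θ → ℕ) (he : δ θ a + (δ θ b + δ θ c) = e) :
      gen θ a * (gen θ b * gen θ c) ∈ homogD θ e := by
    rw [← he]
    exact homogD_mul (gen_mem_homogD a) (homogD_mul (gen_mem_homogD b) (gen_mem_homogD c))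
  obtain ⟨X, hX⟩ : ∃ X, X = gen θ i := ⟨_, rfl⟩
  obtain ⟨Y, hY⟩ : ∃ Y, Y = gen θ j := ⟨_, rfl⟩
  obtain ⟨Z, hZ⟩ : ∃ Z, Z = gen θ k := ⟨_, rfl⟩
  obtain ⟨E, hE⟩ : ∃ E, E = brk q (δ θ i) (δ θ j) X Y := ⟨_, rfl⟩
  obtain ⟨F, hF⟩ : ∃ F, F = brk q (δ θ i + δ θ j) (δ θ j) E Y := ⟨_, rfl⟩
  obtain ⟨G, hG⟩ : ∃ G, G = brk q (δ θ i + δ θ j + δ θ j) (δ θ k) F Z := ⟨_, rfl⟩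
  obtain ⟨W, hW⟩ : ∃ W, W = elemIJK q i j k := ⟨_, rfl⟩
  obtain ⟨V, hV⟩ : ∃ V, V = brk q (δ θ i + δ θ j + δ θ k) (δ θ j) W Y := ⟨_, rfl⟩
  obtain ⟨V', hV'⟩ : ∃ V', V' = brk q (δ θ i + δ θ j + δ θ k) (δ θ k) W Z := ⟨_, rfl⟩
  obtain ⟨T, hT⟩ : ∃ T, T = Y * Z * Y - (q k j * ζ ^ 13 : ℂ) • (Y * (Y * Z))
        - (q j k : ℂ) • (Z * Y * Y - (q k j * ζ ^ 13 : ℂ) • (Y * (Z * Y))) := ⟨_, rfl⟩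
  obtain ⟨T', hT'⟩ : ∃ T', T' = Y * Z * Z - (q j k * ζ ^ 6 : ℂ) • (Z * (Y * Z))
        - (q j k : ℂ) • (Z * Y * Z - (q j k * ζ ^ 6 : ℂ) • (Z * (Z * Y))) := ⟨_, rfl⟩
  have hTd : T ∈ homogD θ (δ θ j + (δ θ j + δ θ k)) := by
    simp only [hT, hY, hZ, mul_assoc]
    refine sub_mem (sub_mem ?_ (Submodule.smul_mem _ _ ?_)) (Submodule.smul_mem _ _
      (sub_mem ?_ (Submodule.smul_mem _ _ ?_))) <;>
    exact hword _ _ _ _ (by abel)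
  have hTd' : T' ∈ homogD θ (δ θ j + (δ θ k + δ θ k)) := by
    simp only [hT', hY, hZ, mul_assoc]
    refine sub_mem (sub_mem ?_ (Submodule.smul_mem _ _ ?_)) (Submodule.smul_mem _ _
      (sub_mem ?_ (Submodule.smul_mem _ _ ?_))) <;>
    exact hword _ _ _ _ (by abel)
  have h9 := cyclotomic_nine h.prim
  obtain ⟨A, _, _, π, hπ⟩ := hI.exists_quotient
  have hzy : (π Z * π Y - (q k j : ℂ) • (π Y * π Z)) * π Y
      - (q k j * ζ ^ 5 : ℂ) • (π Y * (π Z * π Y - (q k j : ℂ) • (π Y * π Z))) = 0 := by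
    simpa [brk, qf_add_left, qf_δ_δ, h.jj, ← hY, ← hZ] using (hπ _).1 hkjj
  have hL : (1 - ζ ^ 2 - c * (1 - ζ ^ 7 + (1 - ζ ^ 4) * ζ ^ 6) * q k j) • V
      + ((1 - ζ ^ 4) * q k j * ζ ^ 6) • G ∈ I := by
    have hxz : π X * π Z - (q i k : ℂ) • (π Z * π X) = 0 := by
      simpa [brk, qf_δ_δ, ← hX, ← hZ] using (hπ _).1 hik
    rw [hπ]
    have hf : π F = (π X * π Y - (q i j : ℂ) • (π Y * π X)) * π Y
        - (q i j * ζ ^ 5 : ℂ) • (π Y * (π X * π Y - (q i j : ℂ) • (π Y * π X))) := by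
      simp [hF, hE, brk, qf_add_left, qf_δ_δ, h.jj]
    have hw : π W = (π X * π Y - (q i j : ℂ) • (π Y * π X)) * π Z
        - (q i k * q j k : ℂ) • (π Z * (π X * π Y - (q i j : ℂ) • (π Y * π X))) := by
      simp [hW, elemIJK, brk, qf_add_left, qf_δ_δ, hX, hY, hZ]
    have hv : π V = π W * π Y - (q i j * ζ ^ 5 * q k j : ℂ) • (π Y * π W) := by
      simp [hV, brk, qf_add_left, qf_δ_δ, h.jj]
    simpa [hG, brk, qf_add_left, qf_δ_δ] using brk_relation_left h9 h.jk h.ik hc hxz hzy hw hv hf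
  have hR : T * Z - (q j k * q j k * ζ ^ 6 : ℂ) • (Z * T)
      - c • (T' * Y - (q k j * q k j * ζ ^ 13 : ℂ) • (Y * T')) ∈ I := by
    rw [hπ]
    have ht : π T = π Y * π Z * π Y - (q k j * ζ ^ 13 : ℂ) • (π Y * (π Y * π Z))
        - (q j k : ℂ) • (π Z * π Y * π Y - (q k j * ζ ^ 13 : ℂ) • (π Y * (π Z * π Y))) := by
      simp [hT]
    have hu : π T' = π Y * π Z * π Z - (q j k * ζ ^ 6 : ℂ) • (π Z * (π Y * π Z))
        - (q j k : ℂ) • (π Z * π Y * π Z - (q j k * ζ ^ 6 : ℂ) • (π Z * (π Z * π Y))) := by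
      simp [hT']
    simpa using brk_relation_right h9 h.jk hc hzy ht hu
  have hWe : brk q (δ θ i + δ θ j) (δ θ k) E Z = W := by rw [hW, elemIJK, hE, hX, hY, hZ]
  have key := h.comul_elemIJKJ hI hik hX hY hZ hE hF hW hV
  have key' := h.comul_elemIJKK hI hik hX hY hZ hE hW hV'
  rw [← hT] at key
  rw [← hT'] at key'
  replace key := hI.comul_brk_sub_mem (δ θ i + δ θ j + δ θ k + δ θ j) k key
  replace key' := hI.comul_brk_sub_mem (δ θ i + δ θ j + δ θ k + δ θ k) j key'
  simp only [← hX, ← hY, ← hZ, ← hE, ← hF, ← hW, ← hV, ← hV'] at hEd hFd hWd hVd hVd'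
  have hXd : X ∈ homogD θ (δ θ i) := hX ▸ gen_mem_homogD i
  have hYd : Y ∈ homogD θ (δ θ j) := hY ▸ gen_mem_homogD j
  have hZd : Z ∈ homogD θ (δ θ k) := hZ ▸ gen_mem_homogD k
  simp only [map_add, map_smul] at key key'
  rw [bracketOp_tmul_one S _ _ hVd, bracketOp_one_tmul S _ _ hVd,
    bracketOp_tmul S k hWd hYd rfl, bracketOp_tmul S k hFd hZd (by abel),
    bracketOp_tmul S k hEd (homogD_mul hZd hYd) (by abel),
    bracketOp_tmul S k hEd (homogD_mul hYd hZd) (by abel),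
    bracketOp_tmul S k hXd hTd (by abel), ← hZ, ← hV', hWe, ← hG] at key
  rw [bracketOp_tmul_one S _ _ hVd', bracketOp_one_tmul S _ _ hVd',
    bracketOp_tmul S j hWd hZd rfl,
    bracketOp_tmul S j hEd (homogD_mul hZd hZd) (by abel),
    bracketOp_tmul S j hXd hTd' (by abel), ← hY, ← hV, ← hE, ← hF] at key'
  have hsum := add_mem (sub_mem key (Submodule.smul_mem _ c key'))
    (add_mem (add_mem (tmul_mem_mixedSub_left Z hL)
      (Submodule.smul_mem _ (1 - ζ ^ 8) (tmul_mem_mixedSub_right X hR)))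
      (Submodule.smul_mem _ ((1 - ζ ^ 8) * (q j k * q j k * ζ ^ 6))
        (tmul_mem_mixedSub_left T hik)))
  rw [IsPrimitiveMod, relElem, ← hW, ← hY, ← hZ, ← hV, ← hV', map_sub, map_smul]
  convert hsum using 1
  rw [← hX, ← hZ]
  simp only [qf_add_left, qf_add_right, qf_δ_δ, TensorProduct.tmul_sub, TensorProduct.tmul_smul,
    TensorProduct.sub_tmul, TensorProduct.add_tmul, ← TensorProduct.smul_tmul', h.jj, h.kk, hT']
  have h1 := h.ij
  have h2 := h.jk
  have h3 := h.ik
  generalize (q i j : ℂ) = a at *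
  generalize (q j i : ℂ) = a' at *
  generalize (q j k : ℂ) = b at *
  generalize (q k j : ℂ) = b' at *
  generalize (q i k : ℂ) = e at *
  generalize (q k i : ℂ) = e' at *
  clear hX hY hZ hE hF hG hW hV hV' hT hT' key key' hEd hFd hWd hVd hVd' hik hkjj hWe
  clear hsum hL hR hzy hTd hTd' hword hXd hYd hZd hπ π
  simp only [mul_assoc, mul_sub, sub_mul, mul_smul_comm, smul_mul_assoc, TensorProduct.tmul_sub,
    TensorProduct.tmul_smul]
  match_scalars <;> grind

end NinthRootBraiding

end Primitive

section Conclusion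

variable {θ : ℕ} {q : Fin θ → Fin θ → ℂˣ} {S : BraidedStr θ q} {I : Submodule ℂ (TV θ)}

namespace NinthRootBraiding

variable {i j k : Fin θ} {ζ : ℂ}

lemma relElem_elemIJK_mem (h : NinthRootBraiding q i j k ζ) (hAAH : AAH)
    (hI : IsPreNicholsIdeal S I) (hGK : FinGK I) {c : ℂ} (hc : c * (1 + ζ ^ 4) = q j k) :
    relElem q i j k c (elemIJK q i j k) ∈ I := by
  have h9 := h.prim.pow_eq_one
  have hik := h.brk_ik_mem hAAH hI hGK
  have hkjj := h.brk_kjj_mem hAAH hI hGK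
  refine mem_of_isPrimitiveMod (t := (6, 5, 5)) hAAH hI hGK h.prim k (relElem_mem q i j k c) ?_
    (h.isPrimitiveMod_relElem hI hik hkjj hc) (by decide) h.kk ?_ ?_ ?_
  all_goals simp only [Pi.add_apply, Finset.sum_add_distrib, sum_δ, qf_add_left, qf_add_right,
    qf_δ_δ, h.ii, h.jj, h.kk]
  · norm_num
  · have : (q k i * q k j * ζ ^ 6 * q k j * ζ ^ 6 * (q i k * q j k * ζ ^ 6 * q j k * ζ ^ 6) : ℂ)
        = (q i k * q k i) * (q j k * q k j) ^ 2 * ζ ^ 24 := by ring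
    rw [this, h.ik, h.jk]
    linear_combination ζ ^ 5 * (ζ ^ 18 + ζ ^ 9 + 1) * h9
  · trans (q i j * q j i : ℂ) ^ 2 * (q j k * q k j) ^ 4 * (q i k * q k i) ^ 2 * ζ ^ 45
    · ring
    · rw [h.ij, h.jk, h.ik]
      linear_combination ζ ^ 5 * (ζ ^ 63 + ζ ^ 54 + ζ ^ 45 + ζ ^ 36 + ζ ^ 27 + ζ ^ 18 + ζ ^ 9 + 1)
        * h9
  · norm_num

end NinthRootBraiding

lemma xw_sub_elemIJK_mem (hI : IsPreNicholsIdeal S I) {i j k : Fin θ}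
    (hik : brk q (δ θ i) (δ θ k) (gen θ i) (gen θ k) ∈ I) :
    xw q [i, j, k] - NinthRootBraiding.elemIJK q i j k ∈ I := by
  have hdeg : degW θ [j, k] = δ θ j + δ θ k := by
    simp [degW_cons]
  have hdeg' : degW θ [k] = δ θ k := by
    simp [degW_cons]
  have := sub_mem (I.smul_mem (q i j : ℂ) (hI.mul_left (gen θ j) _ hik))
    (I.smul_mem (q j k : ℂ) (hI.mul_right (gen θ j) _ hik))
  convert this using 1
  simp only [xw, ad1, hdeg, hdeg', NinthRootBraiding.elemIJK, brk, qf_add_left, qf_add_right,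
    qf_δ_δ, mul_sub, sub_mul, mul_smul_comm, smul_mul_assoc, mul_assoc]
  module

lemma NinthRootBraiding.relElem_xw_mem {i j k : Fin θ} {ζ : ℂ}
    (h : NinthRootBraiding q i j k ζ) (hAAH : AAH)
    (hI : IsPreNicholsIdeal S I) (hGK : FinGK I) {c : ℂ} (hc : c * (1 + ζ ^ 4) = q j k) :
    relElem q i j k c (xw q [i, j, k]) ∈ I := by
  have hW := xw_sub_elemIJK_mem hI (j := j) (h.brk_ik_mem hAAH hI hGK)
  refine (Submodule.sub_mem_iff_left I (h.relElem_elemIJK_mem hAAH hI hGK hc)).1 ?_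
  rw [relElem, relElem, sub_sub_sub_comm, ← smul_sub]
  exact sub_mem (hI.brk_sub_mem _ _ (hI.brk_sub_mem _ _ hW _) _)
    (I.smul_mem c (hI.brk_sub_mem _ _ (hI.brk_sub_mem _ _ hW _) _))

end Conclusion

/-- Lemma 3.4: if `q_{ii} = q̃_{ij}⁻¹ ∈ G₉'`,
`q_{jj} = q̃_{jk}⁻¹ = q_{ii}⁵`, `q̃_{ik} = 1` and `q_{kk} = q_{ii}⁶`, then
`[[x_{ijk},x_j]_c,x_k]_c = (1+q̃_{jk})⁻¹ q_{jk} [[x_{ijk},x_k]_c,x_j]_c`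
in every finite-GKdim pre-Nichols algebra of `q`. -/
theorem statement_8 (θ : ℕ) (q : Fin θ → Fin θ → ℂˣ) (S : BraidedStr θ q)
    (hconn : (dynkin q).Connected)
    (hfd : FiniteDimensional ℂ (TV θ ⧸ Jq S))
    (hAAH : AAH)
    (I : Submodule ℂ (TV θ)) (hI : IsPreNicholsIdeal S I) (hGK : FinGK I)
    (i j k : Fin θ) (hij : i ≠ j) (hik : i ≠ k) (hjk : j ≠ k)
    (h1 : IsPrimitiveRoot (q i i : ℂ) 9)
    (h2 : (qtil q i j)⁻¹ = (q i i : ℂ))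
    (h3 : (q j j : ℂ) = (q i i : ℂ) ^ 5)
    (h4 : (qtil q j k)⁻¹ = (q i i : ℂ) ^ 5)
    (h5 : qtil q i k = 1)
    (h6 : (q k k : ℂ) = (q i i : ℂ) ^ 6) :
    brk q (δ θ i + δ θ j + δ θ k + δ θ j) (δ θ k)
        (brk q (δ θ i + δ θ j + δ θ k) (δ θ j) (xw q [i, j, k]) (gen θ j)) (gen θ k) -
      ((1 + qtil q j k)⁻¹ * (q j k : ℂ)) •
        brk q (δ θ i + δ θ j + δ θ k + δ θ k) (δ θ j)
          (brk q (δ θ i + δ θ j + δ θ k) (δ θ k) (xw q [i, j, k]) (gen θ k)) (gen θ j)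
      ∈ I := by
  have h9 := h1.pow_eq_one
  have hij' : qtil q i j = (q i i : ℂ) ^ 8 := by
    rw [← inv_inj, h2, eq_comm, inv_eq_iff_eq_inv]
    exact eq_inv_of_mul_eq_one_left (by linear_combination h9)
  have hjk' : qtil q j k = (q i i : ℂ) ^ 4 := by
    rw [← inv_inj, h4, eq_comm, inv_eq_iff_eq_inv]
    exact eq_inv_of_mul_eq_one_left (by linear_combination h9)
  have hne : (1 + qtil q j k : ℂ) ≠ 0 := by
    intro h0
    have h18 : (q i i : ℂ) ^ 8 = 1 := by
      rw [hjk'] at h0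
      linear_combination ((q i i : ℂ) ^ 4 - 1) * h0
    exact h1.pow_ne_one_of_pos_of_lt (by norm_num) (by norm_num) h18
  have hdata : NinthRootBraiding q i j k (q i i) := ⟨h1, rfl, h3, h6, hij', hjk', h5⟩
  refine hdata.relElem_xw_mem hAAH hI hGK ?_
  rw [← hjk', mul_comm, mul_inv_cancel_left₀ hne]

end PreNicholsPaper
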